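/- Let Ω = ℝⁿ × (0,∞) with n ≥ 2, H = L²(Ω, z dμ), and let the energy form be b(φ,η) = ∫_Ω ( z ∂_z φ ∂_z η̄ + z^{-1/n} ∇_x φ · ∇_x η̄ ) dμ, with energy space E = {φ ∈ H¹_loc(Ω) ∩ H : b(φ,φ) < ∞} normed by ‖φ‖_E² = b(φ,φ) + ‖φ‖_H². Then C_0^∞(Ω) (smooth functions compactly supported in the open set Ω) is dense in E. -/

import Mathlib

open MeasureTheory
open scoped BigOperators

/-- `G` is a weak (distributional) differential of `φ` on the half-space
`Ω = ℝⁿ × (0,∞)`: `φ` and all directional components of `G` are locally integrable on `Ω`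
and integration by parts against test functions supported in `Ω` holds in every direction.
This encodes `φ ∈ H¹_loc(Ω)` with weak differential `G`. -/
def IsWeakFDerivOn (n : ℕ) (φ : EuclideanSpace ℝ (Fin n) × ℝ → ℝ)
    (G : EuclideanSpace ℝ (Fin n) × ℝ → EuclideanSpace ℝ (Fin n) × ℝ → ℝ) : Prop :=
  LocallyIntegrableOn φ {p | 0 < p.2} ∧
  (∀ v : EuclideanSpace ℝ (Fin n) × ℝ,
    LocallyIntegrableOn (fun p => G p v) {p | 0 < p.2}) ∧
  ∀ ψ : EuclideanSpace ℝ (Fin n) × ℝ → ℝ, ContDiff ℝ (⊤ : ℕ∞) ψ → HasCompactSupport ψ →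
    tsupport ψ ⊆ {p | 0 < p.2} → ∀ v : EuclideanSpace ℝ (Fin n) × ℝ,
    ∫ p in {p : EuclideanSpace ℝ (Fin n) × ℝ | 0 < p.2}, φ p * fderiv ℝ ψ p v
      = - ∫ p in {p : EuclideanSpace ℝ (Fin n) × ℝ | 0 < p.2}, G p v * ψ p

/-- The energy density `z |∂_z φ|² + z^(-1/n) |∇ₓ φ|²` of the form `b`, evaluated on a
(weak) differential `G` of `φ`. -/
noncomputable def energyDensity (n : ℕ)
    (G : EuclideanSpace ℝ (Fin n) × ℝ → EuclideanSpace ℝ (Fin n) × ℝ → ℝ)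
    (p : EuclideanSpace ℝ (Fin n) × ℝ) : ℝ :=
  p.2 * (G p (0, 1)) ^ 2 +
    p.2 ^ (-(1 : ℝ) / n) * ∑ i : Fin n, (G p (EuclideanSpace.single i 1, 0)) ^ 2

section Moll
set_option linter.unusedSectionVars false
open scoped Convolution
open ContinuousLinearMap Metric

variable {V : Type*} [NormedAddCommGroup V] [NormedSpace ℝ V] [FiniteDimensional ℝ V]
  [MeasurableSpace V] [BorelSpace V] (μ : Measure V) [μ.IsAddHaarMeasure]

theorem moll_int (f : ContDiffBump (0 : V)) {v : V → ℝ} (hv : LocallyIntegrable v μ) (x : V) :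
    Integrable (fun t => f.normed μ t * v (x - t)) μ := by
  have := (f.hasCompactSupport_normed (μ := μ)).convolutionExists_left (lsmul ℝ ℝ)
    f.continuous_normed hv x
  simpa [ConvolutionExistsAt] using this

theorem moll_def (f : ContDiffBump (0 : V)) (v : V → ℝ) (x : V) :
    (f.normed μ ⋆[lsmul ℝ ℝ, μ] v) x = ∫ t, f.normed μ t * v (x - t) ∂μ := by
  simp [convolution_def]

theorem moll_jensen (f : ContDiffBump (0 : V)) {v : V → ℝ} (hv : LocallyIntegrable v μ)
    (hv2 : Integrable (fun x => v x ^ 2) μ) (x : V) :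
    ((f.normed μ ⋆[lsmul ℝ ℝ, μ] v) x) ^ 2 ≤
      (f.normed μ ⋆[lsmul ℝ ℝ, μ] (fun x => v x ^ 2)) x := by
  have i1 := moll_int μ f hv x
  have i2 := moll_int μ f hv2.locallyIntegrable x
  have i0 : Integrable (f.normed μ) μ := f.integrable_normed
  have d1 := moll_def μ f v x
  rw [moll_def μ f (fun x => v x ^ 2) x]
  set c := (f.normed μ ⋆[lsmul ℝ ℝ, μ] v) x with hc
  have h0 : 0 ≤ ∫ t, f.normed μ t * (v (x - t) - c) ^ 2 ∂μ :=
    integral_nonneg fun t => mul_nonneg (f.nonneg_normed t) (sq_nonneg _)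
  have h1 : ∫ t, f.normed μ t * (v (x - t) - c) ^ 2 ∂μ =
      ∫ t, (f.normed μ t * v (x - t) ^ 2 - (2 * c) * (f.normed μ t * v (x - t))
        + c ^ 2 * f.normed μ t) ∂μ := by
    congr 1; ext t; ring
  have j : Integrable (fun t => f.normed μ t * v (x - t) ^ 2
      - (2 * c) * (f.normed μ t * v (x - t))) μ := i2.sub (i1.const_mul _)
  rw [h1, integral_add j (i0.const_mul _),
    integral_sub i2 (i1.const_mul _), integral_const_mul, integral_const_mul, ← d1,
    f.integral_normed] at h0
  nlinarith

theorem moll_cont (f : ContDiffBump (0 : V)) {v : V → ℝ} (hv : LocallyIntegrable v μ) :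
    Continuous (f.normed μ ⋆[lsmul ℝ ℝ, μ] v) :=
  f.hasCompactSupport_normed.continuous_convolution_left _ f.continuous_normed hv

theorem moll_young (f : ContDiffBump (0 : V)) {v : V → ℝ} (hv : LocallyIntegrable v μ)
    (hv2 : Integrable (fun x => v x ^ 2) μ) :
    Integrable (fun x => ((f.normed μ ⋆[lsmul ℝ ℝ, μ] v) x) ^ 2) μ ∧
    ∫ x, ((f.normed μ ⋆[lsmul ℝ ℝ, μ] v) x) ^ 2 ∂μ ≤ ∫ x, v x ^ 2 ∂μ := by
  have i0 : Integrable (f.normed μ) μ := f.integrable_normed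
  have i1 : Integrable (f.normed μ ⋆[lsmul ℝ ℝ, μ] (fun x => v x ^ 2)) μ :=
    i0.integrable_convolution (lsmul ℝ ℝ) hv2
  have i2 : Integrable (fun x => ((f.normed μ ⋆[lsmul ℝ ℝ, μ] v) x) ^ 2) μ := by
    refine i1.mono' ((moll_cont μ f hv).pow 2).aestronglyMeasurable ?_
    filter_upwards with x
    rw [Real.norm_of_nonneg (sq_nonneg _)]
    exact moll_jensen μ f hv hv2 x
  refine ⟨i2, (integral_mono i2 i1 (moll_jensen μ f hv hv2)).trans ?_⟩
  rw [integral_convolution (lsmul ℝ ℝ) i0 hv2, f.integral_normed]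
  simp

theorem locInt_of_sq {v : V → ℝ} (hm : AEStronglyMeasurable v μ)
    (hv2 : Integrable (fun x => v x ^ 2) μ) : LocallyIntegrable v μ :=
  ((memLp_two_iff_integrable_sq hm).2 hv2).locallyIntegrable (by norm_num)

theorem moll_tendsto {u : V → ℝ} (hm : AEStronglyMeasurable u μ)
    (hu2 : Integrable (fun x => u x ^ 2) μ) {ε : ℝ} (hε : 0 < ε) :
    ∃ r > 0, ∀ f : ContDiffBump (0 : V), f.rOut ≤ r →
      Integrable (fun x => ((f.normed μ ⋆[lsmul ℝ ℝ, μ] u) x - u x) ^ 2) μ ∧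
      ∫ x, ((f.normed μ ⋆[lsmul ℝ ℝ, μ] u) x - u x) ^ 2 ∂μ ≤ ε := by
  have hU := (memLp_two_iff_integrable_sq hm).2 hu2
  obtain ⟨g, gs, hg, gc, gm⟩ :=
    MemLp.exists_hasCompactSupport_integral_rpow_sub_le (μ := μ) (p := 2) (by norm_num)
      (f := u) (by simpa using hU) (ε := ε / 12) (by positivity)
  replace gm : MemLp g 2 μ := by simpa using gm
  replace hg : ∫ x, (u x - g x) ^ 2 ∂μ ≤ ε / 12 := by simpa using hg
  have hw : MemLp (fun x => u x - g x) 2 μ := hU.sub gm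
  have iw := (memLp_two_iff_integrable_sq hw.1).1 hw
  have lw := locInt_of_sq μ hw.1 iw
  have lu := locInt_of_sq μ hm hu2
  have lg : LocallyIntegrable g μ := gc.locallyIntegrable
  set K := cthickening 1 (tsupport g) with hK
  have Kc : IsCompact K := gs.isCompact.cthickening
  set M := μ.real K with hM
  have M0 : 0 ≤ M := measureReal_nonneg
  set η := Real.sqrt (ε / (6 * (M + 1))) with hη
  have η2 : η ^ 2 = ε / (6 * (M + 1)) := Real.sq_sqrt (by positivity)
  have η0 : 0 < η := Real.sqrt_pos.2 (by positivity)
  have huc := gs.uniformContinuous_of_continuous gc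
  obtain ⟨r, r0, hr⟩ := Metric.uniformContinuous_iff.1 huc η η0
  refine ⟨min (r) 1, by positivity, fun f hf => ?_⟩
  have hfr : f.rOut ≤ r := hf.trans (min_le_left _ _)
  have hf1 : f.rOut ≤ 1 := hf.trans (min_le_right _ _)
  set G := (f.normed μ ⋆[lsmul ℝ ℝ, μ] g) with hG
  have hGg : ∀ x, |G x - g x| ≤ η := fun x => by
    have := f.dist_normed_convolution_le (μ := μ) (x₀ := x) (ε := η) gc.aestronglyMeasurable
      (fun y hy => (hr ((mem_ball.1 hy).trans_le hfr)).le)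
    simpa [Real.dist_eq] using this
  have hout : ∀ x, x ∉ K → G x - g x = 0 := fun x hx => by
    have hy : ∀ y ∈ ball x f.rOut, g y = 0 := fun y hy => by
      by_contra h
      apply hx
      refine mem_cthickening_of_dist_le x y 1 _ (subset_tsupport g h) ?_
      rw [dist_comm]; exact ((mem_ball.1 hy).le).trans hf1
    have hx0 := hy x (mem_ball_self f.rOut_pos)
    have := f.dist_normed_convolution_le (μ := μ) (x₀ := x) (ε := 0) gc.aestronglyMeasurable
      (fun y h => by rw [hy y h, hx0]; simp)
    have h2 := dist_le_zero.1 this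
    rw [hG, h2]; simp
  have iK : Integrable (K.indicator fun _ => η ^ 2) μ :=
    (integrable_indicator_iff Kc.measurableSet).2 (integrableOn_const Kc.measure_lt_top.ne)
  have hle : ∀ x, (G x - g x) ^ 2 ≤ K.indicator (fun _ => η ^ 2) x := fun x => by
    by_cases hx : x ∈ K
    · rw [Set.indicator_of_mem hx, ← sq_abs]
      exact pow_le_pow_left₀ (abs_nonneg _) (hGg x) 2
    · rw [Set.indicator_of_notMem hx, hout x hx]; simp
  have iG : Integrable (fun x => (G x - g x) ^ 2) μ := by
    refine iK.mono' (((moll_cont μ f lg).sub gc).pow 2).aestronglyMeasurable ?_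
    filter_upwards with x
    rw [Real.norm_of_nonneg (sq_nonneg _)]
    exact hle x
  have bG : ∫ x, (G x - g x) ^ 2 ∂μ ≤ ε / 6 := by
    refine (integral_mono iG iK hle).trans ?_
    rw [integral_indicator Kc.measurableSet, setIntegral_const, smul_eq_mul, ← hM, η2,
      ← mul_div_assoc, div_le_div_iff₀ (by positivity) (by norm_num)]
    nlinarith
  obtain ⟨iW, bW⟩ := moll_young μ f lw iw
  have hsplit : ∀ x, (f.normed μ ⋆[lsmul ℝ ℝ, μ] u) x =
      (f.normed μ ⋆[lsmul ℝ ℝ, μ] (fun x => u x - g x)) x + G x := fun x => by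
    rw [hG, moll_def, moll_def, moll_def, ← integral_add (moll_int μ f lw x) (moll_int μ f lg x)]
    congr 1; ext t; ring
  have hb : ∀ x, ((f.normed μ ⋆[lsmul ℝ ℝ, μ] u) x - u x) ^ 2 ≤
      3 * ((f.normed μ ⋆[lsmul ℝ ℝ, μ] (fun x => u x - g x)) x) ^ 2 + 3 * (G x - g x) ^ 2
        + 3 * (u x - g x) ^ 2 := fun x => by
    rw [hsplit x]
    set A := (f.normed μ ⋆[lsmul ℝ ℝ, μ] (fun x => u x - g x)) x
    nlinarith [sq_nonneg (A - (G x - g x)), sq_nonneg (A + (u x - g x)),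
      sq_nonneg ((G x - g x) + (u x - g x))]
  have iB := ((iW.const_mul 3).add (iG.const_mul 3)).add (iw.const_mul 3)
  have iL : Integrable (fun x => ((f.normed μ ⋆[lsmul ℝ ℝ, μ] u) x - u x) ^ 2) μ := by
    refine iB.mono' (((moll_cont μ f lu).aestronglyMeasurable.sub hm).pow 2) ?_
    filter_upwards with x
    rw [Real.norm_of_nonneg (sq_nonneg _)]
    exact hb x
  refine ⟨iL, (integral_mono iL iB hb).trans ?_⟩
  have e : ∫ x, (3 * ((f.normed μ ⋆[lsmul ℝ ℝ, μ] (fun x => u x - g x)) x) ^ 2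
      + 3 * (G x - g x) ^ 2 + 3 * (u x - g x) ^ 2) ∂μ ≤ ε := by
    rw [integral_add ((iW.const_mul 3).fun_add (iG.const_mul 3)) (iw.const_mul 3),
      integral_add (iW.const_mul 3) (iG.const_mul 3), integral_const_mul, integral_const_mul,
      integral_const_mul]
    linarith
  exact e

/-- derivative of the mollification of a function with global weak derivative `h` -/
theorem moll_fderiv (f : ContDiffBump (0 : V)) {u h : V → ℝ} {v : V} (hu : LocallyIntegrable u μ)
    (hw : ∀ ψ : V → ℝ, ContDiff ℝ (⊤ : ℕ∞) ψ →
      ∫ p, u p * fderiv ℝ ψ p v ∂μ = - ∫ p, h p * ψ p ∂μ) (x : V) :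
    fderiv ℝ (f.normed μ ⋆[lsmul ℝ ℝ, μ] u) x v = (f.normed μ ⋆[lsmul ℝ ℝ, μ] h) x := by
  have hc : HasCompactSupport (f.normed μ) := f.hasCompactSupport_normed
  have hs : ContDiff ℝ (⊤ : ℕ∞) (f.normed μ) := f.contDiff_normed
  have hd : Differentiable ℝ (f.normed μ) := hs.differentiable (by simp)
  have h1 := hc.hasFDerivAt_convolution_left (lsmul ℝ ℝ) (hs.of_le (by exact_mod_cast le_top)) hu x
  rw [h1.fderiv, convolution_eq_swap]
  have hex : Integrable (fun t => ((lsmul ℝ ℝ : ℝ →L[ℝ] ℝ →L[ℝ] ℝ).precompL V)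
      (fderiv ℝ (f.normed μ) (x - t)) (u t)) μ := by
    have := (hc.fderiv ℝ).convolutionExists_left ((lsmul ℝ ℝ : ℝ →L[ℝ] ℝ →L[ℝ] ℝ).precompL V)
      (hs.continuous_fderiv (by simp)) hu x
    exact (convolutionExistsAt_iff_integrable_swap (L := (lsmul ℝ ℝ : ℝ →L[ℝ] ℝ →L[ℝ] ℝ).precompL V)).1 this
  rw [ContinuousLinearMap.integral_apply hex, convolution_eq_swap]
  have hψ : ContDiff ℝ (⊤ : ℕ∞) (fun y => f.normed μ (x - y)) := hs.comp (contDiff_const.sub contDiff_id)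
  have := hw _ hψ
  have hfd : ∀ y, fderiv ℝ (fun y => f.normed μ (x - y)) y v = - fderiv ℝ (f.normed μ) (x - y) v := by
    intro y
    have h2 : HasFDerivAt (fun y : V => x - y) (-(ContinuousLinearMap.id ℝ V)) y :=
      (hasFDerivAt_id y).const_sub x
    have h3 := (hd (x - y)).hasFDerivAt.comp y h2
    rw [show (fun y => f.normed μ (x - y)) = (f.normed μ) ∘ (fun y => x - y) from rfl, h3.fderiv]
    simp
  simp only [hfd, mul_neg, integral_neg, neg_inj] at this
  calc _ = ∫ p, u p * fderiv ℝ (f.normed μ) (x - p) v ∂μ := by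
        congr 1; ext p; simp [precompL_apply, mul_comm]
    _ = _ := by rw [this]; congr 1; ext p; simp [mul_comm]

end Moll


section Cut
set_option linter.unusedSectionVars false
open scoped Convolution
open ContinuousLinearMap Metric

variable {V : Type*} [NormedAddCommGroup V] [NormedSpace ℝ V] [FiniteDimensional ℝ V]
  [MeasurableSpace V] [BorelSpace V] (μ : Measure V) [μ.IsAddHaarMeasure]

theorem int_cut {Ω : Set V} {g c : V → ℝ} (hg : LocallyIntegrableOn g Ω μ) (hc : Continuous c)
    (hcs : HasCompactSupport c) (hs : tsupport c ⊆ Ω) : Integrable (fun p => c p * g p) μ := by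
  have h1 : IntegrableOn g (tsupport c) μ := hg.integrableOn_compact_subset hs hcs
  have h2 : IntegrableOn (fun p => c p * g p) (tsupport c) μ :=
    h1.continuousOn_mul hc.continuousOn hcs
  refine (integrableOn_iff_integrable_of_support_subset ?_).1 h2
  intro p hp
  apply subset_tsupport
  intro h
  apply hp
  simp [h]

theorem memLp_cut {Ω : Set V} {g c : V → ℝ} (hg : LocallyIntegrableOn g Ω μ)
    (hg2 : LocallyIntegrableOn (fun p => g p ^ 2) Ω μ) (hc : Continuous c)
    (hcs : HasCompactSupport c) (hs : tsupport c ⊆ Ω) : MemLp (fun p => c p * g p) 2 μ := by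
  refine (memLp_two_iff_integrable_sq (int_cut μ hg hc hcs hs).1).2 ?_
  have hts : tsupport (fun p => c p ^ 2) ⊆ tsupport c := by
    apply closure_mono
    intro p hp h
    exact hp (by simp [h])
  have := int_cut μ hg2 (hc.pow 2) (hcs.mono' (subset_closure.trans hts)) (hts.trans hs)
  refine this.congr (Filter.Eventually.of_forall fun p => ?_)
  simp [mul_pow]

theorem weak_cut {Ω : Set V} {φ g χ : V → ℝ} {v : V}
    (hφ : LocallyIntegrableOn φ Ω μ)
    (hg : LocallyIntegrableOn g Ω μ)
    (hw : ∀ ψ : V → ℝ, ContDiff ℝ (⊤ : ℕ∞) ψ → HasCompactSupport ψ → tsupport ψ ⊆ Ω →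
      ∫ p in Ω, φ p * fderiv ℝ ψ p v ∂μ = - ∫ p in Ω, g p * ψ p ∂μ)
    (hχ : ContDiff ℝ (⊤ : ℕ∞) χ) (hχc : HasCompactSupport χ) (hχs : tsupport χ ⊆ Ω)
    (ψ : V → ℝ) (hψ : ContDiff ℝ (⊤ : ℕ∞) ψ) :
    ∫ p, (χ p * φ p) * fderiv ℝ ψ p v ∂μ =
      - ∫ p, (χ p * g p + fderiv ℝ χ p v * φ p) * ψ p ∂μ := by
  have dχ : Differentiable ℝ χ := hχ.differentiable (by simp)
  have dψ : Differentiable ℝ ψ := hψ.differentiable (by simp)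
  have hts : tsupport (fun p => χ p * ψ p) ⊆ tsupport χ := tsupport_mul_subset_left
  have h := hw (fun p => χ p * ψ p) (hχ.mul hψ) hχc.mul_right (hts.trans hχs)
  have cχ' : Continuous fun p => fderiv ℝ χ p v := (hχ.continuous_fderiv (by simp)).clm_apply continuous_const
  have cψ' : Continuous fun p => fderiv ℝ ψ p v := (hψ.continuous_fderiv (by simp)).clm_apply continuous_const
  have tχ' : tsupport (fun p => fderiv ℝ χ p v) ⊆ tsupport χ := tsupport_fderiv_apply_subset ℝ v
  have sχ' : HasCompactSupport fun p => fderiv ℝ χ p v := hχc.fderiv_apply ℝ v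
  have hz : ∀ p, p ∉ Ω → χ p = 0 := fun p hp => image_eq_zero_of_notMem_tsupport fun h => hp (hχs h)
  have hz' : ∀ p, p ∉ Ω → fderiv ℝ χ p v = 0 := fun p hp =>
    image_eq_zero_of_notMem_tsupport (f := fun p => fderiv ℝ χ p v) fun h => hp (hχs (tχ' h))
  have hd : ∀ p, fderiv ℝ (fun p => χ p * ψ p) p v = χ p * fderiv ℝ ψ p v + ψ p * fderiv ℝ χ p v := by
    intro p
    rw [fderiv_fun_mul (dχ p) (dψ p)]
    simp
  have f1 : ∫ p in Ω, φ p * fderiv ℝ (fun p => χ p * ψ p) p v ∂μ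
      = ∫ p, φ p * fderiv ℝ (fun p => χ p * ψ p) p v ∂μ := by
    apply setIntegral_eq_integral_of_forall_compl_eq_zero
    intro p hp
    rw [hd, hz p hp, hz' p hp]; simp
  have f2 : ∫ p in Ω, g p * (χ p * ψ p) ∂μ = ∫ p, g p * (χ p * ψ p) ∂μ := by
    apply setIntegral_eq_integral_of_forall_compl_eq_zero
    intro p hp
    rw [hz p hp]; simp
  rw [f1, f2] at h
  have i1 : Integrable (fun p => (χ p * fderiv ℝ ψ p v) * φ p) μ :=
    int_cut μ hφ (hχ.continuous.mul cψ') hχc.mul_right (tsupport_mul_subset_left.trans hχs)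
  have i2 : Integrable (fun p => (fderiv ℝ χ p v * ψ p) * φ p) μ :=
    int_cut μ hφ (cχ'.mul hψ.continuous) sχ'.mul_right
      ((tsupport_mul_subset_left.trans tχ').trans hχs)
  have i3 : Integrable (fun p => (χ p * ψ p) * g p) μ :=
    int_cut μ hg (hχ.continuous.mul hψ.continuous) hχc.mul_right (tsupport_mul_subset_left.trans hχs)
  have e1 : ∫ p, φ p * fderiv ℝ (fun p => χ p * ψ p) p v ∂μ =
      ∫ p, (χ p * fderiv ℝ ψ p v) * φ p ∂μ + ∫ p, (fderiv ℝ χ p v * ψ p) * φ p ∂μ := by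
    rw [← integral_add i1 i2]; congr 1; ext p; rw [hd]; ring
  have e2 : ∫ p, (χ p * g p + fderiv ℝ χ p v * φ p) * ψ p ∂μ =
      ∫ p, (χ p * ψ p) * g p ∂μ + ∫ p, (fderiv ℝ χ p v * ψ p) * φ p ∂μ := by
    rw [← integral_add i3 i2]; congr 1; ext p; ring
  have e3 : ∫ p, (χ p * φ p) * fderiv ℝ ψ p v ∂μ = ∫ p, (χ p * fderiv ℝ ψ p v) * φ p ∂μ := by
    congr 1; ext p; ring
  have e4 : ∫ p, g p * (χ p * ψ p) ∂μ = ∫ p, (χ p * ψ p) * g p ∂μ := by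
    congr 1; ext p; ring
  rw [e3, e2]
  rw [e1, e4] at h
  linarith

theorem zero_pair {u h : V → ℝ} {v : V} (hu : MemLp u 2 μ) (hh : MemLp h 2 μ)
    (hw : ∀ ψ : V → ℝ, ContDiff ℝ (⊤ : ℕ∞) ψ →
      ∫ p, u p * fderiv ℝ ψ p v ∂μ = - ∫ p, h p * ψ p ∂μ) :
    ∫ p, u p * h p ∂μ = 0 := by
  have iu := (memLp_two_iff_integrable_sq hu.1).1 hu
  have ih := (memLp_two_iff_integrable_sq hh.1).1 hh
  have lu := locInt_of_sq μ hu.1 iu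
  have lh := locInt_of_sq μ hh.1 ih
  have iuh : Integrable (fun p => u p * h p) μ := hu.integrable_mul hh
  set N := ∫ p, u p ^ 2 ∂μ + ∫ p, h p ^ 2 ∂μ with hN
  have N0 : 0 ≤ N := add_nonneg (integral_nonneg fun _ => sq_nonneg _) (integral_nonneg fun _ => sq_nonneg _)
  have key : ∀ η > 0, |∫ p, u p * h p ∂μ| ≤ η := by
    intro η hη
    set c := η / (N + 1) with hc
    have c0 : 0 < c := by positivity
    have cN : c * N ≤ η := by
      rw [hc, div_mul_eq_mul_div, div_le_iff₀ (by positivity)]; nlinarith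
    obtain ⟨r1, r10, h1⟩ := moll_tendsto μ hu.1 iu (ε := c * η / 2) (by positivity)
    obtain ⟨r2, r20, h2⟩ := moll_tendsto μ hh.1 ih (ε := c * η / 2) (by positivity)
    let f : ContDiffBump (0 : V) := ⟨min r1 r2 / 2, min r1 r2, by positivity, by
      have : 0 < min r1 r2 := by positivity
      linarith⟩
    obtain ⟨j1, k1⟩ := h1 f (min_le_left _ _)
    obtain ⟨j2, k2⟩ := h2 f (min_le_right _ _)
    set U := (f.normed μ ⋆[lsmul ℝ ℝ, μ] u) with hU
    set H := (f.normed μ ⋆[lsmul ℝ ℝ, μ] h) with hH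
    have sU : ContDiff ℝ (⊤ : ℕ∞) U :=
      f.hasCompactSupport_normed.contDiff_convolution_left _ f.contDiff_normed lu
    have hw1 := hw U sU
    have hd : ∀ p, fderiv ℝ U p v = H p := moll_fderiv μ f lu hw
    simp only [hd] at hw1
    have mU : MemLp (fun p => U p - u p) 2 μ :=
      (memLp_two_iff_integrable_sq ((moll_cont μ f lu).aestronglyMeasurable.sub hu.1)).2 j1
    have mH : MemLp (fun p => H p - h p) 2 μ :=
      (memLp_two_iff_integrable_sq ((moll_cont μ f lh).aestronglyMeasurable.sub hh.1)).2 j2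
    have a1 : Integrable (fun p => u p * (H p - h p)) μ := hu.integrable_mul mH
    have a2 : Integrable (fun p => h p * (U p - u p)) μ := hh.integrable_mul mU
    have e1 : ∫ p, u p * H p ∂μ = ∫ p, u p * h p ∂μ + ∫ p, u p * (H p - h p) ∂μ := by
      rw [← integral_add iuh a1]; congr 1; ext p; ring
    have e2 : ∫ p, h p * U p ∂μ = ∫ p, u p * h p ∂μ + ∫ p, h p * (U p - u p) ∂μ := by
      rw [← integral_add iuh a2]; congr 1; ext p; ring
    have bd : ∀ {a b : V → ℝ}, Integrable (fun p => a p ^ 2) μ → Integrable (fun p => b p ^ 2) μ →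
        ∫ p, b p ^ 2 ∂μ ≤ c * η / 2 →
        |∫ p, a p * b p ∂μ| ≤ c * ∫ p, a p ^ 2 ∂μ + η / 2 := by
      intro a b ia ib hb
      refine (abs_integral_le_integral_abs).trans ?_
      have : ∫ p, |a p * b p| ∂μ ≤ ∫ p, (c * a p ^ 2 + c⁻¹ * b p ^ 2) ∂μ := by
        refine integral_mono_of_nonneg (Filter.Eventually.of_forall fun _ => abs_nonneg _)
          ((ia.const_mul c).add (ib.const_mul c⁻¹)) (Filter.Eventually.of_forall fun p => ?_)
        have e : c * a p ^ 2 + c⁻¹ * b p ^ 2 = c⁻¹ * ((c * a p) ^ 2 + b p ^ 2) := by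
          field_simp
        have e' : |a p * b p| = c⁻¹ * |(c * a p) * b p| := by
          rw [mul_assoc, abs_mul c, abs_of_pos c0, ← mul_assoc, inv_mul_cancel₀ c0.ne', one_mul]
        simp only [e, e']
        apply mul_le_mul_of_nonneg_left _ (by positivity)
        rw [abs_le]
        constructor <;> nlinarith [sq_nonneg (c * a p + b p), sq_nonneg (c * a p - b p)]
      refine this.trans ?_
      rw [integral_add (ia.const_mul c) (ib.const_mul c⁻¹), integral_const_mul, integral_const_mul]
      have : c⁻¹ * ∫ p, b p ^ 2 ∂μ ≤ c⁻¹ * (c * η / 2) := mul_le_mul_of_nonneg_left hb (by positivity)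
      have e : c⁻¹ * (c * η / 2) = η / 2 := by field_simp
      linarith
    have b1 := bd iu j2 k2
    have b2 := bd ih j1 k1
    rw [abs_le] at b1 b2 ⊢
    rw [e1, e2] at hw1
    constructor <;> nlinarith
  by_contra hne
  have := key (|∫ p, u p * h p ∂μ| / 2) (by positivity)
  have : 0 < |∫ p, u p * h p ∂μ| := by positivity
  linarith

end Cut


section OneVar
open Real

theorem S_deriv_cont : Continuous (deriv smoothTransition) :=
  (Real.smoothTransition.contDiff (n := 1)).continuous_deriv (by simp)

theorem S_diff : Differentiable ℝ smoothTransition :=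
  (Real.smoothTransition.contDiff (n := 1)).differentiable (by simp)

theorem S_deriv_nonneg (x : ℝ) : 0 ≤ deriv smoothTransition x :=
  Real.smoothTransition.monotone.deriv_nonneg

theorem S_deriv_zero_left {x : ℝ} (hx : x ≤ 0) : deriv smoothTransition x = 0 := by
  apply IsLocalMin.deriv_eq_zero
  refine Filter.Eventually.of_forall fun y => ?_
  rw [Real.smoothTransition.zero_of_nonpos hx]
  exact Real.smoothTransition.nonneg y

theorem S_deriv_zero_right {x : ℝ} (hx : 1 ≤ x) : deriv smoothTransition x = 0 := by
  apply IsLocalMax.deriv_eq_zero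
  refine Filter.Eventually.of_forall fun y => ?_
  rw [Real.smoothTransition.one_of_one_le hx]
  exact Real.smoothTransition.le_one y

theorem S_deriv_bdd : ∃ C : ℝ, 0 ≤ C ∧ ∀ x, deriv smoothTransition x ≤ C := by
  obtain ⟨C, hC⟩ := (isCompact_Icc (a := (0:ℝ)) (b := 1)).exists_bound_of_continuousOn
    S_deriv_cont.continuousOn
  have C0 : 0 ≤ C := (norm_nonneg _).trans (hC 0 (by simp))
  refine ⟨C, C0, fun x => ?_⟩
  by_cases h : x ∈ Set.Icc (0:ℝ) 1
  · exact (le_abs_self _).trans (hC x h)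
  · rcases lt_or_ge x 0 with h0 | h0
    · rw [S_deriv_zero_left h0.le]; exact C0
    · rw [S_deriv_zero_right]
      · exact C0
      · by_contra h1
        exact h ⟨h0, (not_le.1 h1).le⟩

theorem ext_smooth {g : ℝ → ℝ} {c : ℝ} (c0 : 0 < c) (hg : ∀ z, 0 < z → ContDiffAt ℝ (⊤ : ℕ∞) g z)
    (h0 : ∀ z, 0 < z → z < c → g z = 0) :
    ContDiff ℝ (⊤ : ℕ∞) (fun z => if 0 < z then g z else 0) := by
  rw [contDiff_iff_contDiffAt]
  intro z
  rcases lt_or_ge z c with h | h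
  · apply (contDiffAt_const (c := (0:ℝ))).congr_of_eventuallyEq
    filter_upwards [eventually_lt_nhds h] with y hy
    split_ifs with hy0
    · exact h0 y hy0 hy
    · rfl
  · have hz : 0 < z := c0.trans_le h
    apply (hg z hz).congr_of_eventuallyEq
    filter_upwards [eventually_gt_nhds hz] with y hy
    simp [hy]

theorem ext_hasDeriv {g : ℝ → ℝ} {z d : ℝ} (hz : 0 < z) (hg : HasDerivAt g d z) :
    HasDerivAt (fun z => if 0 < z then g z else 0) d z := by
  apply hg.congr_of_eventuallyEq
  filter_upwards [eventually_gt_nhds hz] with y hy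
  simp [hy]

noncomputable def m1g (k z : ℝ) : ℝ :=
  smoothTransition (2 + log z / k) * smoothTransition (-log z - 1) / √(-log z)
noncomputable def m1 (k z : ℝ) : ℝ := if 0 < z then m1g k z else 0
noncomputable def m2g (k z : ℝ) : ℝ :=
  smoothTransition (2 + log z / k) * smoothTransition (2 - z / k)
noncomputable def m2 (k z : ℝ) : ℝ := if 0 < z then m2g k z else 0

theorem logcut {k z : ℝ} (hk : 0 < k) (hz : 0 < z) (h : z < exp (-(2 * k))) :
    smoothTransition (2 + log z / k) = 0 := by
  apply Real.smoothTransition.zero_of_nonpos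
  have : log z < -(2 * k) := (log_lt_iff_lt_exp hz).2 h
  have : log z / k ≤ -2 := by rw [div_le_iff₀ hk]; linarith
  linarith

theorem m1_supp {k z : ℝ} (hk : 0 < k) (h : z ∉ Set.Icc (exp (-(2 * k))) 1) : m1 k z = 0 := by
  unfold m1
  split_ifs with hz
  · rcases lt_or_ge z (exp (-(2 * k))) with h1 | h1
    · simp [m1g, logcut hk hz h1]
    · have : 1 < z := by
        by_contra h2
        exact h ⟨h1, not_lt.1 h2⟩
      have := log_pos this
      simp [m1g, Real.smoothTransition.zero_of_nonpos (show -log z - 1 ≤ 0 by linarith)]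
  · rfl

theorem m2_supp {k z : ℝ} (hk : 0 < k) (h : z ∉ Set.Icc (exp (-(2 * k))) (2 * k)) : m2 k z = 0 := by
  unfold m2
  split_ifs with hz
  · rcases lt_or_ge z (exp (-(2 * k))) with h1 | h1
    · simp [m2g, logcut hk hz h1]
    · have : 2 * k < z := by
        by_contra h2
        exact h ⟨h1, not_lt.1 h2⟩
      have : 2 ≤ z / k := by rw [le_div_iff₀ hk]; linarith
      simp [m2g, Real.smoothTransition.zero_of_nonpos (show 2 - z / k ≤ 0 by linarith)]
  · rfl

theorem m2_smooth {k : ℝ} (hk : 0 < k) : ContDiff ℝ (⊤ : ℕ∞) (m2 k) := by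
  apply ext_smooth (exp_pos (-(2 * k)))
  · intro z hz
    have hl : ContDiffAt ℝ (⊤ : ℕ∞) log z := contDiffAt_log.2 hz.ne'
    have hS : ContDiff ℝ (⊤ : ℕ∞) smoothTransition := Real.smoothTransition.contDiff
    exact (hS.contDiffAt.comp z (contDiffAt_const.add (hl.div_const k))).mul
      (hS.contDiffAt.comp z (contDiffAt_const.sub (contDiffAt_id.div_const k)))
  · intro z hz h1
    simp [m2g, logcut hk hz h1]

theorem m1g_zero {k z : ℝ} (hz : exp (-1) < z) : m1g k z = 0 := by
  have : -1 < log z := (lt_log_iff_exp_lt ((exp_pos _).trans hz)).2 hz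
  simp [m1g, Real.smoothTransition.zero_of_nonpos (show -log z - 1 ≤ 0 by linarith)]

theorem m1_smooth {k : ℝ} (hk : 0 < k) : ContDiff ℝ (⊤ : ℕ∞) (m1 k) := by
  apply ext_smooth (exp_pos (-(2 * k)))
  · intro z hz
    have hl : ContDiffAt ℝ (⊤ : ℕ∞) log z := contDiffAt_log.2 hz.ne'
    have hS : ContDiff ℝ (⊤ : ℕ∞) smoothTransition := Real.smoothTransition.contDiff
    rcases lt_or_ge z 1 with h | h
    · have ht : 0 < -log z := by have := log_neg hz h; linarith
      exact ((hS.contDiffAt.comp z (contDiffAt_const.add (hl.div_const k))).mul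
        (hS.contDiffAt.comp z (hl.neg.sub contDiffAt_const))).div (hl.neg.sqrt ht.ne')
        (Real.sqrt_pos.2 ht).ne'
    · apply (contDiffAt_const (c := (0:ℝ))).congr_of_eventuallyEq
      have : exp (-1) < z := (show exp (-1) < 1 by simp).trans_le h
      filter_upwards [eventually_gt_nhds this] with y hy
      exact m1g_zero hy
  · intro z hz h1
    simp [m1g, logcut hk hz h1]

theorem m2_deriv {k z : ℝ} (hz : 0 < z) : deriv (m2 k) z =
    deriv smoothTransition (2 + log z / k) * (z⁻¹ / k) * smoothTransition (2 - z / k) +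
      smoothTransition (2 + log z / k) * (deriv smoothTransition (2 - z / k) * (-(1 / k))) := by
  apply HasDerivAt.deriv
  apply ext_hasDeriv hz
  have h1 : HasDerivAt (fun z => 2 + log z / k) (z⁻¹ / k) z :=
    ((hasDerivAt_log hz.ne').div_const k).const_add 2
  have h2 : HasDerivAt (fun z : ℝ => 2 - z / k) (-(1 / k)) z :=
    ((hasDerivAt_id z).div_const k).const_sub 2
  exact ((S_diff _).hasDerivAt.comp z h1).mul ((S_diff _).hasDerivAt.comp z h2)

theorem m1_deriv {k z : ℝ} (hz : 0 < z) (hz1 : z < 1) : deriv (m1 k) z =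
    ((deriv smoothTransition (2 + log z / k) * (z⁻¹ / k) * smoothTransition (-log z - 1) +
      smoothTransition (2 + log z / k) * (deriv smoothTransition (-log z - 1) * (-z⁻¹)))
      * √(-log z) - smoothTransition (2 + log z / k) * smoothTransition (-log z - 1) *
        (-z⁻¹ / (2 * √(-log z)))) / √(-log z) ^ 2 := by
  have ht : 0 < -log z := by have := log_neg hz hz1; linarith
  apply HasDerivAt.deriv
  apply ext_hasDeriv hz
  have h1 : HasDerivAt (fun z => 2 + log z / k) (z⁻¹ / k) z :=
    ((hasDerivAt_log hz.ne').div_const k).const_add 2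
  have h2 : HasDerivAt (fun z : ℝ => -log z - 1) (-z⁻¹) z :=
    ((hasDerivAt_log hz.ne').neg).sub_const 1
  have h3 : HasDerivAt (fun z : ℝ => √(-log z)) (-z⁻¹ / (2 * √(-log z))) z :=
    ((hasDerivAt_log hz.ne').neg).sqrt ht.ne'
  exact (((S_diff _).hasDerivAt.comp z h1).mul ((S_diff _).hasDerivAt.comp z h2)).div h3
    (Real.sqrt_pos.2 ht).ne'

set_option maxHeartbeats 1000000 in
/-- pointwise Hardy inequality -/
theorem hardy_pt {C k z β a g : ℝ} (hC0 : 0 ≤ C) (hC : ∀ x, deriv smoothTransition x ≤ C)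
    (hk : 0 < k) (hz : 0 < z) (hβ0 : 0 ≤ β) (hβ1 : β ≤ 1) :
    (1 / 4) * (a ^ 2 * (β * m1 k z) ^ 2 / (z * (-log z))) ≤
      (β * m1 k z * a) * (β * m1 k z * g + β * deriv (m1 k) z * a) +
        C * exp 4 * (a ^ 2 * z) + z * g ^ 2 := by
  rcases le_or_gt (-log z) 1 with h | ht1
  · have : m1 k z = 0 := by
      simp [m1, m1g, hz, Real.smoothTransition.zero_of_nonpos (show -log z - 1 ≤ 0 by linarith)]
    rw [this]
    simp
    positivity
  have hz1 : z < 1 := by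
    by_contra h
    have := log_nonneg (not_lt.1 h)
    linarith
  rw [m1_deriv hz hz1]
  simp only [m1, if_pos hz, m1g]
  have hB' : deriv smoothTransition (-log z - 1) * z⁻¹ ≤ C * exp 4 * z := by
    rcases le_or_gt 2 (-log z) with h2 | h2
    · rw [S_deriv_zero_right (by linarith)]; simp; positivity
    · have hle : z⁻¹ ≤ exp 4 * z := by
        have : exp (-2) ≤ z := by
          rw [← le_log_iff_exp_le hz]; linarith
        have h3 : exp 4 * (exp (-2) * exp (-2)) = 1 := by
          rw [← exp_add, ← exp_add]; norm_num
        have h4 : exp (-2) * exp (-2) ≤ z * z := mul_le_mul this this (exp_pos _).le hz.le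
        rw [inv_le_iff_one_le_mul₀ hz]
        nlinarith [exp_pos 4]
      calc _ ≤ C * (exp 4 * z) := mul_le_mul (hC _) hle (by positivity) hC0
        _ = _ := by ring
  set A := smoothTransition (2 + log z / k)
  set A' := deriv smoothTransition (2 + log z / k) with hA'
  set B := smoothTransition (-log z - 1)
  set B' := deriv smoothTransition (-log z - 1) with hhB
  have A0 : 0 ≤ A := Real.smoothTransition.nonneg _
  have A1 : A ≤ 1 := Real.smoothTransition.le_one _
  have B0 : 0 ≤ B := Real.smoothTransition.nonneg _
  have B1 : B ≤ 1 := Real.smoothTransition.le_one _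
  have A'0 : 0 ≤ A' := S_deriv_nonneg _
  have B'0 : 0 ≤ B' := S_deriv_nonneg _
  set r := √(-log z) with hr
  have r0 : 0 < r := Real.sqrt_pos.2 (by linarith)
  have r2 : r ^ 2 = -log z := Real.sq_sqrt (by linarith)
  rw [← r2]
  have r21 : 1 ≤ r ^ 2 := by rw [r2]; exact ht1.le
  clear_value r A A' B B'
  set s := β * A * B with hs
  have hs0 : 0 ≤ s := by positivity
  have hs1 : s ≤ 1 := by
    have : β * A ≤ 1 := mul_le_one₀ hβ1 A0 A1
    exact mul_le_one₀ this B0 B1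
  have e1 : β * (A * B / r) = s / r := by rw [hs]; ring
  have e2 : β * (((A' * (z⁻¹ / k) * B + A * (B' * -z⁻¹)) * r - A * B * (-z⁻¹ / (2 * r))) / r ^ 2)
      = β * A' * B * (z⁻¹ / k) / r - β * A * (B' * z⁻¹) / r + s * z⁻¹ / (2 * r ^ 3) := by
    rw [hs]; field_simp; ring
  rw [e1, e2]
  have e3 : s / r * a * (s / r * g + (β * A' * B * (z⁻¹ / k) / r - β * A * (B' * z⁻¹) / r
        + s * z⁻¹ / (2 * r ^ 3)) * a)
      = s ^ 2 * (a * g / r ^ 2) + a ^ 2 * (s * β * A' * B * (z⁻¹ / k) / r ^ 2)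
        - a ^ 2 * (s * β * A / r ^ 2 * (B' * z⁻¹)) + (1 / 2) * (s ^ 2 * (a ^ 2 * z⁻¹ / r ^ 4)) := by
    field_simp
    ring
  have e4 : (1 / 4) * (a ^ 2 * (s / r) ^ 2 / (z * r ^ 2)) = (1 / 4) * (s ^ 2 * (a ^ 2 * z⁻¹ / r ^ 4)) := by
    field_simp
  rw [e3, e4]
  have p1 : 0 ≤ a ^ 2 * (s * β * A' * B * (z⁻¹ / k) / r ^ 2) := by positivity
  have p2 : a ^ 2 * (s * β * A / r ^ 2 * (B' * z⁻¹)) ≤ C * exp 4 * (a ^ 2 * z) := by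
    have : s * β * A / r ^ 2 ≤ 1 := by
      rw [div_le_one (by positivity)]
      have : s * β * A ≤ 1 := mul_le_one₀ (mul_le_one₀ hs1 hβ0 hβ1) A0 A1
      linarith
    have h5 : s * β * A / r ^ 2 * (B' * z⁻¹) ≤ 1 * (C * exp 4 * z) :=
      mul_le_mul this hB' (by positivity) (by norm_num)
    nlinarith [sq_nonneg a]
  have p3 : 0 ≤ (1 / 4) * (a ^ 2 * z⁻¹ / r ^ 4) + a * g / r ^ 2 + z * g ^ 2 := by
    have : (1 / 4) * (a ^ 2 * z⁻¹ / r ^ 4) + a * g / r ^ 2 + z * g ^ 2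
      = z * (a / (2 * z * r ^ 2) + g) ^ 2 := by field_simp; ring
    rw [this]; positivity
  have p4 : s ^ 2 * (z * g ^ 2) ≤ z * g ^ 2 := by
    have : s ^ 2 ≤ 1 := pow_le_one₀ hs0 hs1
    have : 0 ≤ z * g ^ 2 := by positivity
    nlinarith
  have p5 := mul_nonneg (sq_nonneg s) p3
  generalize a ^ 2 * z⁻¹ / r ^ 4 = X at *
  generalize a * g / r ^ 2 = Y at *
  generalize z * g ^ 2 = Z at *
  generalize a ^ 2 * (s * β * A' * B * (z⁻¹ / k) / r ^ 2) = Q1 at *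
  generalize a ^ 2 * (s * β * A / r ^ 2 * (B' * z⁻¹)) = Q2 at *
  generalize C * exp 4 * (a ^ 2 * z) = Q3 at *
  generalize s ^ 2 = T at *
  have p6 : 0 ≤ 1 / 4 * (T * X) + T * Y + T * Z := by
    calc 0 ≤ _ := p5
      _ = _ := by ring
  linarith

theorem m2_nonneg (k z : ℝ) : 0 ≤ m2 k z := by
  unfold m2 m2g
  split_ifs
  · exact mul_nonneg (Real.smoothTransition.nonneg _) (Real.smoothTransition.nonneg _)
  · rfl

theorem m2_le_one (k z : ℝ) : m2 k z ≤ 1 := by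
  unfold m2 m2g
  split_ifs
  · exact mul_le_one₀ (Real.smoothTransition.le_one _) (Real.smoothTransition.nonneg _) (Real.smoothTransition.le_one _)
  · norm_num

noncomputable def Wt (z : ℝ) : ℝ := if z < exp (-2) then 1 / (z * (log z) ^ 2) else 0

theorem Wt_nonneg {z : ℝ} (hz : 0 < z) : 0 ≤ Wt z := by
  unfold Wt; split_ifs <;> positivity

theorem m2_deriv_bd {C k z : ℝ} (hC : ∀ x, deriv smoothTransition x ≤ C)
    (hk : 3 ≤ k) (hz : 0 < z) : z * (deriv (m2 k) z) ^ 2 ≤ 8 * C ^ 2 * Wt z + 2 * C ^ 2 * z := by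
  have k0 : 0 < k := by linarith
  rw [m2_deriv hz]
  set x := deriv smoothTransition (2 + log z / k) * (z⁻¹ / k) * smoothTransition (2 - z / k)
  set y := smoothTransition (2 + log z / k) * (deriv smoothTransition (2 - z / k) * (-(1 / k)))
  have hx : z * x ^ 2 ≤ 4 * C ^ 2 * Wt z := by
    by_cases h : 0 < 2 + log z / k ∧ 2 + log z / k < 1
    · have l1 : log z < -k := by
        have := h.2
        have : log z / k < -1 := by linarith
        rw [div_lt_iff₀ k0] at this; linarith
      have l2 : -(2 * k) < log z := by
        have : -2 < log z / k := by linarith [h.1]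
        rw [lt_div_iff₀ k0] at this; linarith
      have hz2 : z < exp (-2) := (log_lt_iff_lt_exp hz).1 (by linarith)
      have x1 : x ^ 2 ≤ (C * (z⁻¹ / k)) ^ 2 := by
        apply pow_le_pow_left₀
        · exact mul_nonneg (mul_nonneg (S_deriv_nonneg _) (by positivity)) (Real.smoothTransition.nonneg _)
        · have h0 : 0 ≤ deriv smoothTransition (2 + log z / k) * (z⁻¹ / k) :=
            mul_nonneg (S_deriv_nonneg _) (by positivity)
          calc x ≤ deriv smoothTransition (2 + log z / k) * (z⁻¹ / k) :=
                mul_le_of_le_one_right h0 (Real.smoothTransition.le_one _)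
            _ ≤ _ := mul_le_mul_of_nonneg_right (hC _) (by positivity)
      have l3 : (log z) ^ 2 ≤ 4 * k ^ 2 := by nlinarith
      have l4 : 0 < (log z) ^ 2 := by nlinarith
      rw [Wt, if_pos hz2]
      calc z * x ^ 2 ≤ z * (C * (z⁻¹ / k)) ^ 2 := mul_le_mul_of_nonneg_left x1 hz.le
        _ = C ^ 2 * (4 * (1 / (z * (4 * k ^ 2)))) := by field_simp
        _ ≤ C ^ 2 * (4 * (1 / (z * (log z) ^ 2))) := by gcongr
        _ = _ := by ring
    · have : x = 0 := by
        have : deriv smoothTransition (2 + log z / k) = 0 := by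
          rcases le_or_gt (2 + log z / k) 0 with h1 | h1
          · exact S_deriv_zero_left h1
          · exact S_deriv_zero_right (by by_contra h2; exact h ⟨h1, not_le.1 h2⟩)
        simp [x, this]
      rw [this]
      have := Wt_nonneg hz
      simp; positivity
  have hy : z * y ^ 2 ≤ C ^ 2 * z := by
    have : y ^ 2 ≤ C ^ 2 := by
      rw [← sq_abs]
      apply pow_le_pow_left₀ (abs_nonneg _)
      rw [abs_mul, abs_of_nonneg (Real.smoothTransition.nonneg _), abs_mul,
        abs_of_nonneg (S_deriv_nonneg _), abs_neg, abs_of_pos (by positivity)]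
      have h0 := S_deriv_nonneg (2 - z / k)
      have h2 : 1 / k ≤ 1 := by rw [div_le_one k0]; linarith
      calc _ ≤ 1 * (C * 1) := mul_le_mul (Real.smoothTransition.le_one _)
            (mul_le_mul (hC _) h2 (by positivity) (h0.trans (hC _))) (by positivity) (by norm_num)
        _ = C := by ring
    nlinarith
  nlinarith [sq_nonneg (x - y)]

end OneVar


section HalfSpace
open Real

abbrev VV (n : ℕ) := EuclideanSpace ℝ (Fin n) × ℝ
abbrev Om (n : ℕ) : Set (VV n) := {p | 0 < p.2}

instance instHaarVV (n : ℕ) : (volume : Measure (VV n)).IsAddHaarMeasure :=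
  Measure.prod.instIsAddHaarMeasure volume volume

theorem Om_open (n : ℕ) : IsOpen (Om n) := isOpen_lt continuous_const continuous_snd

theorem cut_props {n : ℕ} {β : EuclideanSpace ℝ (Fin n) → ℝ} {m : ℝ → ℝ} {c C : ℝ}
    (hβ : ContDiff ℝ (⊤ : ℕ∞) β) (hβc : HasCompactSupport β) (hm : ContDiff ℝ (⊤ : ℕ∞) m)
    (c0 : 0 < c) (hs : ∀ z, z ∉ Set.Icc c C → m z = 0) :
    ContDiff ℝ (⊤ : ℕ∞) (fun p : VV n => β p.1 * m p.2) ∧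
    HasCompactSupport (fun p : VV n => β p.1 * m p.2) ∧
    tsupport (fun p : VV n => β p.1 * m p.2) ⊆ Om n ∧
    ∀ p v : VV n, fderiv ℝ (fun p : VV n => β p.1 * m p.2) p v =
      fderiv ℝ β p.1 v.1 * m p.2 + β p.1 * (deriv m p.2 * v.2) := by
  have hK : IsCompact (tsupport β ×ˢ Set.Icc c C) := hβc.prod isCompact_Icc
  have hsub : tsupport (fun p : VV n => β p.1 * m p.2) ⊆ tsupport β ×ˢ Set.Icc c C := by
    apply closure_minimal _ hK.isClosed
    intro p hp
    refine ⟨subset_tsupport _ fun h => hp (by simp [h]), ?_⟩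
    by_contra h
    exact hp (by simp [hs _ h])
  refine ⟨(hβ.comp contDiff_fst).mul (hm.comp contDiff_snd),
    hK.of_isClosed_subset (isClosed_tsupport _) hsub, fun p hp => ?_, fun p v => ?_⟩
  · exact c0.trans_le (hsub hp).2.1
  · have d1 : DifferentiableAt ℝ β p.1 := hβ.differentiable (by simp) _
    have d2 : DifferentiableAt ℝ m p.2 := hm.differentiable (by simp) _
    have h1 : HasFDerivAt (fun p : VV n => β p.1) ((fderiv ℝ β p.1).comp (ContinuousLinearMap.fst ℝ _ _)) p :=
      d1.hasFDerivAt.comp p hasFDerivAt_fst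
    have h2 : HasFDerivAt (fun p : VV n => m p.2) ((fderiv ℝ m p.2).comp (ContinuousLinearMap.snd ℝ _ _)) p :=
      d2.hasFDerivAt.comp p hasFDerivAt_snd
    rw [(h1.fun_mul h2).fderiv]
    have e : fderiv ℝ m p.2 v.2 = deriv m p.2 * v.2 := by
      rw [fderiv_eq_smul_deriv]; simp [mul_comm]
    simp [e]
    ring

noncomputable def bmp (n : ℕ) : ContDiffBump (0 : EuclideanSpace ℝ (Fin n)) := ⟨1, 2, by norm_num, by norm_num⟩

noncomputable def betaR (n : ℕ) (R : ℝ) (x : EuclideanSpace ℝ (Fin n)) : ℝ := bmp n (R⁻¹ • x)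

theorem betaR_smooth (n : ℕ) (R : ℝ) : ContDiff ℝ (⊤ : ℕ∞) (betaR n R) :=
  (bmp n).contDiff.comp (contDiff_id.const_smul R⁻¹)

theorem betaR_cs (n : ℕ) {R : ℝ} (hR : 0 < R) : HasCompactSupport (betaR n R) :=
  (bmp n).hasCompactSupport.comp_homeomorph (Homeomorph.smulOfNeZero R⁻¹ (inv_ne_zero hR.ne'))

theorem betaR_nonneg (n : ℕ) (R : ℝ) (x) : 0 ≤ betaR n R x := (bmp n).nonneg
theorem betaR_le_one (n : ℕ) (R : ℝ) (x) : betaR n R x ≤ 1 := (bmp n).le_one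

theorem betaR_one (n : ℕ) {R : ℝ} (hR : 0 < R) {x} (hx : ‖x‖ ≤ R) : betaR n R x = 1 := by
  apply (bmp n).one_of_mem_closedBall
  rw [mem_closedBall_zero_iff, norm_smul, norm_inv, Real.norm_of_nonneg hR.le,
    inv_mul_le_iff₀ hR]
  simpa [bmp] using hx

theorem betaR_fderiv_zero (n : ℕ) {R : ℝ} (hR : 0 < R) {x} (hx : ‖x‖ < R) :
    fderiv ℝ (betaR n R) x = 0 := by
  have : betaR n R =ᶠ[nhds x] fun _ => 1 := by
    have h : ∀ᶠ y in nhds x, ‖y‖ < R := continuous_norm.continuousAt.eventually_lt_const hx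
    filter_upwards [h] with y hy
    exact betaR_one n hR hy.le
  rw [this.fderiv_eq]; simp

theorem betaR_fderiv_bd (n : ℕ) : ∃ C : ℝ, 0 ≤ C ∧ ∀ R > 0, ∀ x v,
    |fderiv ℝ (betaR n R) x v| ≤ C / R * ‖v‖ := by
  have hs : ContDiff ℝ (⊤ : ℕ∞) (bmp n) := (bmp n).contDiff
  obtain ⟨C, hC⟩ := ((bmp n).hasCompactSupport.fderiv ℝ).exists_bound_of_continuous
    (hs.continuous_fderiv (by simp))
  refine ⟨C, (norm_nonneg _).trans (hC 0), fun R hR x v => ?_⟩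
  have h2 : HasFDerivAt (fun x : EuclideanSpace ℝ (Fin n) => R⁻¹ • x)
      (R⁻¹ • ContinuousLinearMap.id ℝ _) x := (hasFDerivAt_id x).const_smul R⁻¹
  have h3 := ((hs.differentiable (by simp)) (R⁻¹ • x)).hasFDerivAt.comp x h2
  have : fderiv ℝ (betaR n R) x = _ := h3.fderiv
  rw [this]
  simp only [ContinuousLinearMap.comp_smul, ContinuousLinearMap.comp_id,
    smul_apply, smul_eq_mul, abs_mul, abs_inv, abs_of_pos hR]
  have h4 := (fderiv ℝ (bmp n) (R⁻¹ • x)).le_of_opNorm_le (hC _) v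
  rw [Real.norm_eq_abs] at h4
  calc _ ≤ R⁻¹ * (C * ‖v‖) := mul_le_mul_of_nonneg_left h4 (by positivity)
    _ = _ := by ring

theorem locInt_div {n : ℕ} {f : VV n → ℝ} {w : ℝ → ℝ} (hw : ∀ z, 0 < z → w z ≠ 0)
    (hwc : ContinuousOn w (Set.Ioi 0)) (h : IntegrableOn (fun p => f p * w p.2) (Om n)) :
    LocallyIntegrableOn f (Om n) := by
  have h1 : LocallyIntegrableOn (fun p : VV n => (w p.2)⁻¹ * (f p * w p.2)) (Om n) := by
    refine h.locallyIntegrableOn.continuousOn_mul ?_ (Om_open n).isLocallyClosed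
    refine ContinuousOn.inv₀ (hwc.comp continuousOn_snd fun p hp => hp) fun p hp => hw _ hp
  intro x hx
  obtain ⟨s, hs, hi⟩ := h1 x hx
  refine ⟨s ∩ Om n, Filter.inter_mem hs self_mem_nhdsWithin, ?_⟩
  have hi2 := hi.mono_set (Set.inter_subset_left (t := Om n))
  rw [IntegrableOn] at hi2 ⊢
  have : (fun p : VV n => (w p.2)⁻¹ * (f p * w p.2)) =ᵐ[volume.restrict (s ∩ Om n)] f := by
    rw [Set.inter_comm, ← Measure.restrict_restrict (Om_open n).measurableSet]
    filter_upwards [ae_restrict_mem (Om_open n).measurableSet] with p hp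
    have := hw _ hp
    field_simp
  exact hi2.congr this

theorem Wt_meas : Measurable Wt := by
  unfold Wt
  exact Measurable.ite measurableSet_Iio (by fun_prop) measurable_const

theorem hardy_int {n : ℕ} {φ g : VV n → ℝ} (hφ : LocallyIntegrableOn φ (Om n))
    (hg : LocallyIntegrableOn g (Om n))
    (hw : ∀ ψ : VV n → ℝ, ContDiff ℝ (⊤ : ℕ∞) ψ → HasCompactSupport ψ → tsupport ψ ⊆ Om n →
      ∫ p in Om n, φ p * fderiv ℝ ψ p (0, 1) = - ∫ p in Om n, g p * ψ p)
    (hφ2 : IntegrableOn (fun p => φ p ^ 2 * p.2) (Om n))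
    (hg2 : IntegrableOn (fun p => p.2 * g p ^ 2) (Om n)) :
    IntegrableOn (fun p => φ p ^ 2 * Wt p.2) (Om n) := by
  obtain ⟨C, C0, hC⟩ := S_deriv_bdd
  have mΩ := (Om_open n).measurableSet
  have lφ2 : LocallyIntegrableOn (fun p => φ p ^ 2) (Om n) :=
    locInt_div (w := fun z => z) (fun z hz => hz.ne') continuousOn_id hφ2
  have lg2 : LocallyIntegrableOn (fun p => g p ^ 2) (Om n) :=
    locInt_div (w := fun z => z) (fun z hz => hz.ne') continuousOn_id (by simpa only [mul_comm] using hg2)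
  have mφ : AEStronglyMeasurable φ (volume.restrict (Om n)) := hφ.aestronglyMeasurable
  let χ : ℕ → VV n → ℝ := fun k p => betaR n (k + 1) p.1 * m1 (k + 1) p.2
  let D : VV n → ℝ := fun p => C * exp 4 * (φ p ^ 2 * p.2) + p.2 * g p ^ 2
  have iD : IntegrableOn D (Om n) := (hφ2.const_mul _).add hg2
  let F : ℕ → VV n → ℝ := fun k p => φ p ^ 2 * (χ k p) ^ 2 / (p.2 * (-log p.2))
  let L : VV n → ℝ := fun p => φ p ^ 2 * (smoothTransition (-log p.2 - 1) / √(-log p.2)) ^ 2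
    / (p.2 * (-log p.2))
  have F0 : ∀ k p, p ∈ Om n → 0 ≤ F k p := by
    intro k p hp
    have hp' : 0 < p.2 := hp
    rcases lt_or_ge (-log p.2) 0 with h | h
    · have : χ k p = 0 := by
        simp [χ, m1, m1g, hp', Real.smoothTransition.zero_of_nonpos (show -log p.2 - 1 ≤ 0 by linarith)]
      simp [F, this]
    · exact div_nonneg (mul_nonneg (sq_nonneg _) (sq_nonneg _)) (mul_nonneg hp'.le h)
  have hF : ∀ k, IntegrableOn (F k) (Om n) ∧ ∫ p in Om n, F k p ≤ 4 * ∫ p in Om n, D p := by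
    intro k
    have k0 : (0:ℝ) < k + 1 := by positivity
    obtain ⟨cs, cc, cΩ, cd⟩ := cut_props (betaR_smooth n (k + 1)) (betaR_cs n k0) (m1_smooth k0)
      (exp_pos _) (fun z hz => m1_supp k0 hz)
    change ContDiff ℝ _ (χ k) at cs
    change HasCompactSupport (χ k) at cc
    change tsupport (χ k) ⊆ _ at cΩ
    have cd1 : ∀ p, fderiv ℝ (χ k) p (0, 1) = betaR n (k + 1) p.1 * deriv (m1 (k + 1)) p.2 := by
      intro p
      have := cd p (0, 1)
      simpa using this
    have cχ' : Continuous fun p => fderiv ℝ (χ k) p ((0, 1) : VV n) :=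
      (cs.continuous_fderiv (by simp)).clm_apply continuous_const
    have tχ' : tsupport (fun p => fderiv ℝ (χ k) p ((0, 1) : VV n)) ⊆ tsupport (χ k) :=
      tsupport_fderiv_apply_subset ℝ _
    have Mu : MemLp (fun p => χ k p * φ p) 2 volume := memLp_cut volume hφ lφ2 cs.continuous cc cΩ
    have Mh : MemLp (fun p => χ k p * g p + fderiv ℝ (χ k) p (0, 1) * φ p) 2 volume :=
      (memLp_cut volume hg lg2 cs.continuous cc cΩ).add
        (memLp_cut volume hφ lφ2 cχ' (cc.fderiv_apply ℝ _) (tχ'.trans cΩ))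
    have hz := zero_pair volume Mu Mh (weak_cut volume hφ hg hw cs cc cΩ)
    have iuh : Integrable (fun p => (χ k p * φ p) * (χ k p * g p + fderiv ℝ (χ k) p (0, 1) * φ p)) volume :=
      Mu.integrable_mul Mh
    have hzΩ : ∫ p in Om n, (χ k p * φ p) * (χ k p * g p + fderiv ℝ (χ k) p (0, 1) * φ p) = 0 := by
      rw [setIntegral_eq_integral_of_forall_compl_eq_zero, hz]
      intro p hp
      have : χ k p = 0 := image_eq_zero_of_notMem_tsupport fun h => hp (cΩ h)
      simp [this]
    have iB : IntegrableOn (fun p => 4 * ((χ k p * φ p) * (χ k p * g p + fderiv ℝ (χ k) p (0, 1) * φ p))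
      + 4 * D p) (Om n) := (iuh.integrableOn.const_mul 4).add (iD.const_mul 4)
    have hle : ∀ p ∈ Om n, F k p ≤ 4 * ((χ k p * φ p) * (χ k p * g p + fderiv ℝ (χ k) p (0, 1) * φ p))
      + 4 * D p := by
      intro p hp
      have := hardy_pt (a := φ p) (g := g p) C0 hC k0 hp (betaR_nonneg n (k + 1) p.1) (betaR_le_one n (k + 1) p.1)
      rw [cd1 p]
      simp only [F, D, χ]
      linarith
    have iF : IntegrableOn (F k) (Om n) := by
      refine Integrable.mono' iB ?_ ?_
      · have m1' : AEStronglyMeasurable (fun p : VV n => (χ k p) ^ 2 / (p.2 * (-log p.2))) (volume.restrict (Om n)) := by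
          apply Measurable.aestronglyMeasurable
          have := cs.continuous.measurable
          fun_prop
        refine ((mφ.pow 2).mul m1').congr (Filter.Eventually.of_forall fun p => ?_)
        simp [F, mul_div_assoc]
      · filter_upwards [ae_restrict_mem mΩ] with p hp
        rw [Real.norm_of_nonneg (F0 k p hp)]
        exact hle p hp
    refine ⟨iF, (setIntegral_mono_on iF iB mΩ hle).trans ?_⟩
    rw [integral_add (iuh.integrableOn.const_mul 4) (iD.const_mul 4), integral_const_mul,
      integral_const_mul, hzΩ]
    simp
  have hlim : ∀ p ∈ Om n, Filter.Tendsto (fun k => F k p) Filter.atTop (nhds (L p)) := by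
    intro p hp
    have hp' : 0 < p.2 := hp
    apply tendsto_const_nhds.congr'
    have e1 : ∀ᶠ k : ℕ in Filter.atTop, -log p.2 ≤ k :=
      tendsto_natCast_atTop_atTop.eventually_ge_atTop _
    have e2 : ∀ᶠ k : ℕ in Filter.atTop, ‖p.1‖ ≤ k :=
      tendsto_natCast_atTop_atTop.eventually_ge_atTop _
    filter_upwards [e1, e2] with k h1 h2
    have k0 : (0:ℝ) < k + 1 := by positivity
    have : (1:ℝ) ≤ 2 + log p.2 / (k + 1) := by
      have : -1 ≤ log p.2 / (k + 1) := by rw [le_div_iff₀ k0]; linarith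
      linarith
    simp [F, L, χ, betaR_one n k0 (h2.trans (by linarith)), m1, m1g, hp',
      Real.smoothTransition.one_of_one_le this]
  have L0 : ∀ p ∈ Om n, 0 ≤ L p := fun p hp =>
    ge_of_tendsto' (hlim p hp) fun k => F0 k p hp
  have iL : IntegrableOn L (Om n) := by
    have mL : AEStronglyMeasurable L (volume.restrict (Om n)) := by
      refine aestronglyMeasurable_of_tendsto_ae Filter.atTop (fun k => (hF k).1.1) ?_
      filter_upwards [ae_restrict_mem mΩ] with p hp using hlim p hp
    refine ⟨mL, ?_⟩
    rw [hasFiniteIntegral_iff_ofReal (by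
      filter_upwards [ae_restrict_mem mΩ] with p hp using L0 p hp)]
    have b : ∀ k, ∫⁻ p in Om n, ENNReal.ofReal (F k p) ≤ ENNReal.ofReal (4 * ∫ p in Om n, D p) := by
      intro k
      rw [← ofReal_integral_eq_lintegral_ofReal (hF k).1 (by
        filter_upwards [ae_restrict_mem mΩ] with p hp using F0 k p hp)]
      exact ENNReal.ofReal_le_ofReal (hF k).2
    calc ∫⁻ p in Om n, ENNReal.ofReal (L p)
        = ∫⁻ p in Om n, Filter.liminf (fun k => ENNReal.ofReal (F k p)) Filter.atTop := by
          apply lintegral_congr_ae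
          filter_upwards [ae_restrict_mem mΩ] with p hp
          exact ((ENNReal.continuous_ofReal.tendsto _).comp (hlim p hp)).liminf_eq.symm
      _ ≤ Filter.liminf (fun k => ∫⁻ p in Om n, ENNReal.ofReal (F k p)) Filter.atTop :=
          lintegral_liminf_le' fun k => (hF k).1.1.aemeasurable.ennreal_ofReal
      _ ≤ ENNReal.ofReal (4 * ∫ p in Om n, D p) :=
          Filter.liminf_le_of_le (by isBoundedDefault) fun b' hb' => by
            obtain ⟨k, hk⟩ := hb'.exists
            exact hk.trans (b k)
      _ < ⊤ := ENNReal.ofReal_lt_top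
  refine Integrable.mono' iL ((mφ.pow 2).mul (Wt_meas.comp measurable_snd).aestronglyMeasurable) ?_
  filter_upwards [ae_restrict_mem mΩ] with p hp
  have hp' : 0 < p.2 := hp
  rw [Real.norm_of_nonneg (mul_nonneg (sq_nonneg _) (Wt_nonneg hp'))]
  by_cases h : p.2 < exp (-2)
  · have hl : log p.2 < -2 := (log_lt_iff_lt_exp hp').2 h
    have : (1:ℝ) ≤ -log p.2 - 1 := by linarith
    have hs : √(-log p.2) ^ 2 = -log p.2 := Real.sq_sqrt (by linarith)
    apply le_of_eq
    simp only [L, Wt, if_pos h, Real.smoothTransition.one_of_one_le this, div_pow, hs]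
    have : log p.2 ≠ 0 := by linarith
    field_simp
  · simp only [Wt, if_neg h, mul_zero]
    exact L0 p hp

end HalfSpace


section Cutoff
open Real

theorem energy_parts {n : ℕ} {G : VV n → VV n → ℝ}
    (hG : ∀ v : VV n, LocallyIntegrableOn (fun p => G p v) (Om n))
    (hE : IntegrableOn (energyDensity n G) (Om n)) :
    IntegrableOn (fun p => p.2 * G p (0, 1) ^ 2) (Om n) ∧
    ∀ i : Fin n, IntegrableOn
      (fun p => p.2 ^ (-(1 : ℝ) / n) * G p (EuclideanSpace.single i 1, 0) ^ 2) (Om n) := by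
  have mΩ := (Om_open n).measurableSet
  have mG : ∀ v, AEStronglyMeasurable (fun p => G p v) (volume.restrict (Om n)) :=
    fun v => (hG v).aestronglyMeasurable
  have mw : AEStronglyMeasurable (fun p : VV n => p.2 ^ (-(1 : ℝ) / n)) (volume.restrict (Om n)) :=
    Measurable.aestronglyMeasurable (by fun_prop)
  have mz : AEStronglyMeasurable (fun p : VV n => p.2) (volume.restrict (Om n)) :=
    Measurable.aestronglyMeasurable (by fun_prop)
  constructor
  · refine Integrable.mono' hE (mz.mul ((mG (0, 1)).pow 2)) ?_
    filter_upwards [ae_restrict_mem mΩ] with p hp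
    have hp' : 0 < p.2 := hp
    rw [Real.norm_of_nonneg (by positivity)]
    unfold energyDensity
    have : 0 ≤ p.2 ^ (-(1 : ℝ) / n) * ∑ i : Fin n, (G p (EuclideanSpace.single i 1, 0)) ^ 2 := by
      positivity
    linarith
  · intro i
    refine Integrable.mono' hE (mw.mul ((mG (EuclideanSpace.single i 1, 0)).pow 2)) ?_
    filter_upwards [ae_restrict_mem mΩ] with p hp
    have hp' : 0 < p.2 := hp
    rw [Real.norm_of_nonneg (by positivity)]
    unfold energyDensity
    have h1 : 0 ≤ p.2 * G p (0, 1) ^ 2 := by positivity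
    have h2 : (G p (EuclideanSpace.single i 1, 0)) ^ 2 ≤
        ∑ i : Fin n, (G p (EuclideanSpace.single i 1, 0)) ^ 2 :=
      Finset.single_le_sum (f := fun i : Fin n => (G p (EuclideanSpace.single i 1, 0)) ^ 2)
        (fun i _ => sq_nonneg _) (Finset.mem_univ i)
    have h3 := mul_le_mul_of_nonneg_left h2 (rpow_nonneg hp'.le (-(1 : ℝ) / n))
    linarith

theorem rpow_bd {n : ℕ} (hn : 2 ≤ n) {k z : ℝ} (hz : exp (-(2 * k)) ≤ z) (hk : 0 ≤ k) :
    z ^ (-(1 : ℝ) / n) ≤ z * exp (2 * k) ^ 2 := by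
  have z0 : 0 < z := (exp_pos _).trans_le hz
  have n0 : (2:ℝ) ≤ n := by exact_mod_cast hn
  have e1 : 1 ≤ exp (2 * k) := one_le_exp (by linarith)
  have h1n : (1:ℝ) / n ≤ 1 := by rw [div_le_one (by linarith)]; linarith
  have h0n : (0:ℝ) ≤ 1 / n := by positivity
  rcases le_total 1 z with h | h
  · have a : z ^ (-(1 : ℝ) / n) ≤ 1 := rpow_le_one_of_one_le_of_nonpos h (by rw [neg_div]; linarith)
    nlinarith
  · have a : z ^ (-(1 : ℝ) / n) ≤ z ^ (-1 : ℝ) :=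
      rpow_le_rpow_of_exponent_ge z0 h (by rw [neg_div]; linarith)
    rw [rpow_neg_one] at a
    have b : 1 ≤ z * exp (2 * k) := by
      have := mul_le_mul_of_nonneg_right hz (exp_pos (2 * k)).le
      rwa [← exp_add, neg_add_cancel, exp_zero] at this
    refine a.trans ?_
    rw [inv_le_iff_one_le_mul₀ z0]
    nlinarith

theorem cutoff_exists (n : ℕ) (hn : 2 ≤ n) {φ : VV n → ℝ} {G : VV n → VV n → ℝ}
    (hweak : IsWeakFDerivOn n φ G)
    (hH : IntegrableOn (fun p => φ p ^ 2 * p.2) (Om n))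
    (hE : IntegrableOn (energyDensity n G) (Om n)) {ε : ℝ} (hε : 0 < ε) :
    ∃ χ : VV n → ℝ, ContDiff ℝ (⊤ : ℕ∞) χ ∧ HasCompactSupport χ ∧ tsupport χ ⊆ Om n ∧
      IntegrableOn (fun p => (φ p - χ p * φ p) ^ 2 * p.2 +
        energyDensity n (fun p v => G p v - (χ p * G p v + fderiv ℝ χ p v * φ p)) p) (Om n) ∧
      ∫ p in Om n, ((φ p - χ p * φ p) ^ 2 * p.2 +
        energyDensity n (fun p v => G p v - (χ p * G p v + fderiv ℝ χ p v * φ p)) p) < ε := by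
  obtain ⟨hφ, hG, hw⟩ := hweak
  obtain ⟨iz, -⟩ := energy_parts hG hE
  have hWt := hardy_int hφ (hG (0, 1)) (fun ψ a b c => hw ψ a b c (0, 1)) hH iz
  obtain ⟨C, C0, hC⟩ := S_deriv_bdd
  obtain ⟨B, B0, hB⟩ := betaR_fderiv_bd n
  have mΩ := (Om_open n).measurableSet
  have mφ : AEStronglyMeasurable φ (volume.restrict (Om n)) := hφ.aestronglyMeasurable
  have mG : ∀ v, AEStronglyMeasurable (fun p => G p v) (volume.restrict (Om n)) :=
    fun v => (hG v).aestronglyMeasurable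
  have mw : AEStronglyMeasurable (fun p : VV n => p.2 ^ (-(1 : ℝ) / n)) (volume.restrict (Om n)) :=
    Measurable.aestronglyMeasurable (by fun_prop)
  have mz : AEStronglyMeasurable (fun p : VV n => p.2) (volume.restrict (Om n)) :=
    Measurable.aestronglyMeasurable (by fun_prop)
  let R : ℕ → ℝ := fun k => exp (2 * ((k : ℝ) + 3))
  have R0 : ∀ k, 0 < R k := fun k => exp_pos _
  let χ : ℕ → VV n → ℝ := fun k p => betaR n (R k) p.1 * m2 ((k : ℝ) + 3) p.2
  have k3 : ∀ k : ℕ, (3:ℝ) ≤ (k : ℝ) + 3 := fun k => by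
    have : (0:ℝ) ≤ k := Nat.cast_nonneg k
    linarith
  have k0 : ∀ k : ℕ, (0:ℝ) < (k : ℝ) + 3 := fun k => by linarith [k3 k]
  have cp := fun k => cut_props (betaR_smooth n (R k)) (betaR_cs n (R0 k)) (m2_smooth (k0 k))
      (exp_pos _) (fun z hz => m2_supp (k0 k) hz)
  have cs : ∀ k, ContDiff ℝ (⊤ : ℕ∞) (χ k) := fun k => (cp k).1
  have cd : ∀ k (p v : VV n), fderiv ℝ (χ k) p v =
      fderiv ℝ (betaR n (R k)) p.1 v.1 * m2 ((k : ℝ) + 3) p.2 +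
        betaR n (R k) p.1 * (deriv (m2 ((k : ℝ) + 3)) p.2 * v.2) := fun k => (cp k).2.2.2
  have cχ' : ∀ k (v : VV n), Continuous fun p => fderiv ℝ (χ k) p v := fun k v =>
    ((cs k).continuous_fderiv (by simp)).clm_apply continuous_const
  let E : ℕ → VV n → ℝ := fun k p => (φ p - χ k p * φ p) ^ 2 * p.2 +
        energyDensity n (fun p v => G p v - (χ k p * G p v + fderiv ℝ (χ k) p v * φ p)) p
  let D : VV n → ℝ := fun p => (φ p ^ 2 * p.2) + 2 * energyDensity n G p
    + (16 * C ^ 2) * (φ p ^ 2 * Wt p.2) + (4 * C ^ 2 + 2 * n * B ^ 2) * (φ p ^ 2 * p.2)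
  have iD : IntegrableOn D (Om n) :=
    ((hH.add (hE.const_mul 2)).add (hWt.const_mul _)).add (hH.const_mul _)
  have mE : ∀ k, AEStronglyMeasurable (E k) (volume.restrict (Om n)) := by
    intro k
    have mχ : AEStronglyMeasurable (χ k) (volume.restrict (Om n)) := (cs k).continuous.aestronglyMeasurable
    have mv : ∀ v, AEStronglyMeasurable (fun p => G p v - (χ k p * G p v + fderiv ℝ (χ k) p v * φ p))
        (volume.restrict (Om n)) := fun v =>
      (mG v).sub ((mχ.mul (mG v)).add ((cχ' k v).aestronglyMeasurable.mul mφ))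
    refine AEStronglyMeasurable.add (((mφ.sub (mχ.mul mφ)).pow 2).mul mz) ?_
    unfold energyDensity
    refine AEStronglyMeasurable.add (mz.mul ((mv (0, 1)).pow 2)) (mw.mul ?_)
    exact Finset.aestronglyMeasurable_fun_sum _ fun i _ => (mv _).pow 2
  have sqd : ∀ a b c : ℝ, 0 ≤ c → c ≤ 1 → (a - (c * a + b)) ^ 2 ≤ 2 * a ^ 2 + 2 * b ^ 2 := by
    intro a b c h0 h1
    have h2 : (1 - c) ^ 2 ≤ 1 := by nlinarith
    have h3 := mul_le_mul_of_nonneg_left h2 (sq_nonneg a)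
    nlinarith [sq_nonneg ((1 - c) * a + b)]
  have bE : ∀ k, ∀ p ∈ Om n, ‖E k p‖ ≤ D p := by
    intro k p hp
    have hp' : 0 < p.2 := hp
    have hwp : 0 ≤ p.2 ^ (-(1 : ℝ) / n) := rpow_nonneg hp'.le _
    have c0 : 0 ≤ χ k p := mul_nonneg (betaR_nonneg _ _ _) (m2_nonneg _ _)
    have c1 : χ k p ≤ 1 := mul_le_one₀ (betaR_le_one _ _ _) (m2_nonneg _ _) (m2_le_one _ _)
    have hnn : 0 ≤ E k p := by
      simp only [E]
      unfold energyDensity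
      positivity
    rw [Real.norm_of_nonneg hnn]
    have b1 : (φ p - χ k p * φ p) ^ 2 * p.2 ≤ φ p ^ 2 * p.2 := by
      apply mul_le_mul_of_nonneg_right _ hp'.le
      have h2 : (1 - χ k p) ^ 2 ≤ 1 := by nlinarith
      have h3 := mul_le_mul_of_nonneg_left h2 (sq_nonneg (φ p))
      nlinarith
    have b2 : p.2 * (fderiv ℝ (χ k) p (0, 1)) ^ 2 ≤ 8 * C ^ 2 * Wt p.2 + 2 * C ^ 2 * p.2 := by
      refine le_trans ?_ (m2_deriv_bd hC (k3 k) hp')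
      apply mul_le_mul_of_nonneg_left _ hp'.le
      rw [cd]
      have h2 : betaR n (R k) p.1 ^ 2 ≤ 1 := by
        nlinarith [betaR_nonneg n (R k) p.1, betaR_le_one n (R k) p.1]
      have h3 := mul_le_mul_of_nonneg_left h2 (sq_nonneg (deriv (m2 ((k : ℝ) + 3)) p.2))
      simp
      nlinarith
    have b3 : ∀ i : Fin n, p.2 ^ (-(1 : ℝ) / n) *
        (fderiv ℝ (χ k) p (EuclideanSpace.single i 1, 0)) ^ 2 ≤ B ^ 2 * p.2 := by
      intro i
      rw [cd]
      simp only [mul_zero, add_zero]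
      by_cases hz : p.2 ∈ Set.Icc (exp (-(2 * ((k : ℝ) + 3)))) (2 * ((k : ℝ) + 3))
      · have r := rpow_bd hn hz.1 (k0 k).le
        have h1 := hB (R k) (R0 k) p.1 (EuclideanSpace.single i 1)
        simp only [EuclideanSpace.norm_single, norm_one, mul_one] at h1
        have h2 : (fderiv ℝ (betaR n (R k)) p.1 (EuclideanSpace.single i 1) * m2 ((k : ℝ) + 3) p.2) ^ 2
            ≤ (B / R k) ^ 2 := by
          apply sq_le_sq'
          · have := abs_le.1 h1
            nlinarith [m2_nonneg ((k : ℝ) + 3) p.2, m2_le_one ((k : ℝ) + 3) p.2, div_nonneg B0 (R0 k).le]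
          · have := abs_le.1 h1
            nlinarith [m2_nonneg ((k : ℝ) + 3) p.2, m2_le_one ((k : ℝ) + 3) p.2, div_nonneg B0 (R0 k).le]
        calc _ ≤ (p.2 * exp (2 * ((k : ℝ) + 3)) ^ 2) * (B / R k) ^ 2 :=
              mul_le_mul r h2 (sq_nonneg _) (by positivity)
          _ = B ^ 2 * p.2 := by
              have := (R0 k).ne'
              change (p.2 * R k ^ 2) * (B / R k) ^ 2 = _
              field_simp
      · rw [m2_supp (k0 k) hz]
        simp
        positivity
    have t2 : p.2 * (G p (0, 1) - (χ k p * G p (0, 1) + fderiv ℝ (χ k) p (0, 1) * φ p)) ^ 2 ≤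
        2 * (p.2 * G p (0, 1) ^ 2) + 2 * (φ p ^ 2 * (8 * C ^ 2 * Wt p.2 + 2 * C ^ 2 * p.2)) := by
      have h1 := mul_le_mul_of_nonneg_left
        (sqd (G p (0, 1)) (fderiv ℝ (χ k) p (0, 1) * φ p) _ c0 c1) hp'.le
      have h2 := mul_le_mul_of_nonneg_left b2 (sq_nonneg (φ p))
      rw [mul_pow] at h1
      linarith
    have t3 : p.2 ^ (-(1 : ℝ) / n) * ∑ i : Fin n, (G p (EuclideanSpace.single i 1, 0) -
        (χ k p * G p (EuclideanSpace.single i 1, 0) +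
          fderiv ℝ (χ k) p (EuclideanSpace.single i 1, 0) * φ p)) ^ 2 ≤
        2 * (p.2 ^ (-(1 : ℝ) / n) * ∑ i : Fin n, (G p (EuclideanSpace.single i 1, 0)) ^ 2)
          + n * (2 * (φ p ^ 2 * (B ^ 2 * p.2))) := by
      rw [Finset.mul_sum, Finset.mul_sum, Finset.mul_sum]
      have : (n : ℝ) * (2 * (φ p ^ 2 * (B ^ 2 * p.2))) = ∑ i : Fin n, 2 * (φ p ^ 2 * (B ^ 2 * p.2)) := by
        simp
      rw [this, ← Finset.sum_add_distrib]
      apply Finset.sum_le_sum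
      intro i _
      have h1 := mul_le_mul_of_nonneg_left
        (sqd (G p (EuclideanSpace.single i 1, 0))
          (fderiv ℝ (χ k) p (EuclideanSpace.single i 1, 0) * φ p) _ c0 c1) hwp
      have h2 := mul_le_mul_of_nonneg_left (b3 i) (sq_nonneg (φ p))
      rw [mul_pow] at h1
      linarith
    simp only [E, D]
    unfold energyDensity
    linarith
  have lE : ∀ p ∈ Om n, Filter.Tendsto (fun k => E k p) Filter.atTop (nhds 0) := by
    intro p hp
    have hp' : 0 < p.2 := hp
    apply tendsto_const_nhds.congr'
    have e1 : ∀ᶠ k : ℕ in Filter.atTop, -log p.2 ≤ k :=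
      tendsto_natCast_atTop_atTop.eventually_ge_atTop _
    have e2 : ∀ᶠ k : ℕ in Filter.atTop, ‖p.1‖ ≤ k :=
      tendsto_natCast_atTop_atTop.eventually_ge_atTop _
    have e3 : ∀ᶠ k : ℕ in Filter.atTop, p.2 ≤ k :=
      tendsto_natCast_atTop_atTop.eventually_ge_atTop _
    filter_upwards [e1, e2, e3] with k h1 h2 h3
    have kk := k0 k
    have s1 : (1:ℝ) ≤ 2 + log p.2 / ((k : ℝ) + 3) := by
      have : -1 ≤ log p.2 / ((k : ℝ) + 3) := by rw [le_div_iff₀ kk]; linarith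
      linarith
    have s2 : (1:ℝ) ≤ 2 - p.2 / ((k : ℝ) + 3) := by
      have : p.2 / ((k : ℝ) + 3) ≤ 1 := by rw [div_le_iff₀ kk]; linarith
      linarith
    have hR : ‖p.1‖ < R k := by
      have := add_one_le_exp (2 * ((k : ℝ) + 3))
      have k00 : (0:ℝ) ≤ k := Nat.cast_nonneg k
      simp only [R]
      linarith
    have x1 : χ k p = 1 := by
      simp [χ, betaR_one n (R0 k) hR.le, m2, m2g, hp', Real.smoothTransition.one_of_one_le s1,
        Real.smoothTransition.one_of_one_le s2]
    have x2 : ∀ v, fderiv ℝ (χ k) p v = 0 := by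
      intro v
      rw [cd, betaR_fderiv_zero n (R0 k) hR, m2_deriv hp', S_deriv_zero_right s1, S_deriv_zero_right s2]
      simp
    simp [E, energyDensity, x1, x2]
  have lim : Filter.Tendsto (fun k => ∫ p in Om n, E k p) Filter.atTop (nhds (∫ p in Om n, (0:ℝ))) := by
    refine tendsto_integral_of_dominated_convergence D mE iD (fun k => ?_) ?_
    · filter_upwards [ae_restrict_mem mΩ] with p hp using bE k p hp
    · filter_upwards [ae_restrict_mem mΩ] with p hp using lE p hp
  rw [integral_zero] at lim
  obtain ⟨k, hk⟩ := (lim.eventually_lt_const hε).exists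
  refine ⟨χ k, cs k, (cp k).2.1, (cp k).2.2.1, ?_, hk⟩
  refine Integrable.mono' iD (mE k) ?_
  filter_upwards [ae_restrict_mem mΩ] with p hp using bE k p hp

end Cutoff


section Final
open Real
open scoped Convolution

theorem moll_supp {n : ℕ} (f : ContDiffBump (0 : VV n)) {h : VV n → ℝ} {T : Set (VV n)} {δ : ℝ}
    (hf : f.rOut ≤ δ) (hh : ∀ p, p ∉ T → h p = 0) {x : VV n} (hx : x ∉ Metric.cthickening δ T) :
    (f.normed volume ⋆[ContinuousLinearMap.lsmul ℝ ℝ, volume] h) x = 0 := by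
  rw [moll_def]
  rw [integral_eq_zero_of_ae]
  filter_upwards with t
  by_cases ht : t ∈ Metric.ball (0 : VV n) f.rOut
  · have : h (x - t) = 0 := by
      apply hh
      intro hT
      apply hx
      apply Metric.mem_cthickening_of_dist_le x (x - t) δ T hT
      rw [dist_eq_norm, sub_sub_cancel]
      exact (mem_ball_zero_iff.1 ht).le.trans hf
    simp [this]
  · have : f.normed volume t = 0 := by
      rw [← Function.notMem_support, f.support_normed_eq]
      exact ht
    simp [this]

end Final

open Real in
open scoped Convolution in
theorem stmt1_aux (n : ℕ) (hn : 2 ≤ n)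
    (φ : EuclideanSpace ℝ (Fin n) × ℝ → ℝ)
    (G : EuclideanSpace ℝ (Fin n) × ℝ → EuclideanSpace ℝ (Fin n) × ℝ → ℝ)
    (hweak : IsWeakFDerivOn n φ G)
    (hH : IntegrableOn (fun p => φ p ^ 2 * p.2) {p | 0 < p.2})
    (hE : IntegrableOn (energyDensity n G) {p | 0 < p.2}) :
    ∀ ε > (0 : ℝ), ∃ ψ : EuclideanSpace ℝ (Fin n) × ℝ → ℝ,
      ContDiff ℝ (⊤ : ℕ∞) ψ ∧ HasCompactSupport ψ ∧
      tsupport ψ ⊆ {p : EuclideanSpace ℝ (Fin n) × ℝ | 0 < p.2} ∧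
      (∫ p in {p : EuclideanSpace ℝ (Fin n) × ℝ | 0 < p.2},
          ((φ p - ψ p) ^ 2 * p.2 +
            energyDensity n (fun p v => G p v - fderiv ℝ ψ p v) p)) < ε := by
  intro ε hε
  obtain ⟨χ, cs, cc, cΩ, iE, hEε⟩ := cutoff_exists n hn hweak hH hE (show 0 < ε / 4 by positivity)
  obtain ⟨hφ, hG, hw⟩ := hweak
  obtain ⟨iz, ix⟩ := energy_parts hG hE
  have mΩ := (Om_open n).measurableSet
  have lφ2 : LocallyIntegrableOn (fun p => φ p ^ 2) (Om n) :=
    locInt_div (w := fun z => z) (fun z hz => hz.ne') continuousOn_id hH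
  have lz2 : LocallyIntegrableOn (fun p => G p (0, 1) ^ 2) (Om n) :=
    locInt_div (w := fun z => z) (fun z hz => hz.ne') continuousOn_id (by simpa only [mul_comm] using iz)
  have wc : ContinuousOn (fun z : ℝ => z ^ (-(1 : ℝ) / n)) (Set.Ioi 0) :=
    continuousOn_id.rpow_const fun z hz => Or.inl (ne_of_gt hz)
  have lx2 : ∀ i : Fin n, LocallyIntegrableOn (fun p => G p (EuclideanSpace.single i 1, 0) ^ 2) (Om n) :=
    fun i => locInt_div (w := fun z => z ^ (-(1 : ℝ) / n)) (fun z hz => (rpow_pos_of_pos hz _).ne') wc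
      (by simpa only [mul_comm] using ix i)
  have cχ' : ∀ v : VV n, Continuous fun p => fderiv ℝ χ p v := fun v =>
    (cs.continuous_fderiv (by simp)).clm_apply continuous_const
  have tχ' : ∀ v : VV n, tsupport (fun p => fderiv ℝ χ p v) ⊆ tsupport χ := fun v =>
    tsupport_fderiv_apply_subset ℝ _
  -- the truncated function and its differential
  let u : VV n → ℝ := fun p => χ p * φ p
  let H : VV n → VV n → ℝ := fun v p => χ p * G p v + fderiv ℝ χ p v * φ p
  have Mu : MemLp u 2 volume := memLp_cut volume hφ lφ2 cs.continuous cc cΩ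
  have MH : ∀ v, LocallyIntegrableOn (fun p => G p v ^ 2) (Om n) → MemLp (H v) 2 volume := fun v h =>
    (memLp_cut volume (hG v) h cs.continuous cc cΩ).add
      (memLp_cut volume hφ lφ2 (cχ' v) (cc.fderiv_apply ℝ _) ((tχ' v).trans cΩ))
  have Mz := MH _ lz2
  have Mx := fun i => MH _ (lx2 i)
  have lu : LocallyIntegrable u volume := Mu.locallyIntegrable (by norm_num)
  have u0 : ∀ p, p ∉ tsupport χ → u p = 0 := fun p hp => by
    simp [u, image_eq_zero_of_notMem_tsupport hp]
  have H0 : ∀ v p, p ∉ tsupport χ → H v p = 0 := fun v p hp => by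
    have : fderiv ℝ χ p v = 0 :=
      image_eq_zero_of_notMem_tsupport (f := fun p => fderiv ℝ χ p v) fun h => hp (tχ' v h)
    simp [H, image_eq_zero_of_notMem_tsupport hp, this]
  obtain ⟨δ, δ0, hδ⟩ := cc.isCompact.exists_cthickening_subset_open (Om_open n) cΩ
  have hK : IsCompact (Metric.cthickening δ (tsupport χ)) := cc.isCompact.cthickening
  set K := Metric.cthickening δ (tsupport χ) with hKdef
  have hTK : tsupport χ ⊆ K := Metric.self_subset_cthickening _
  obtain ⟨M1, hM1⟩ := hK.exists_bound_of_continuousOn (f := fun p : VV n => p.2) continuousOn_snd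
  obtain ⟨M2, hM2⟩ := hK.exists_bound_of_continuousOn (f := fun p : VV n => p.2 ^ (-(1 : ℝ) / n))
    (wc.comp continuousOn_snd fun p hp => hδ hp)
  let M := max 1 (max M1 M2)
  have M0 : 0 < M := lt_of_lt_of_le one_pos (le_max_left _ _)
  have hMz : ∀ p ∈ K, p.2 ≤ M := fun p hp =>
    (le_abs_self _).trans ((hM1 p hp).trans ((le_max_left _ _).trans (le_max_right _ _)))
  have hMw : ∀ p ∈ K, p.2 ^ (-(1 : ℝ) / n) ≤ M := fun p hp =>
    (le_abs_self _).trans ((hM2 p hp).trans ((le_max_right _ _).trans (le_max_right _ _)))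
  let η : ℝ := ε / (8 * M * (n + 2))
  have η0 : 0 < η := by positivity
  obtain ⟨ru, ru0, hru⟩ := moll_tendsto volume Mu.1 ((memLp_two_iff_integrable_sq Mu.1).1 Mu) η0
  obtain ⟨rz, rz0, hrz⟩ := moll_tendsto volume Mz.1 ((memLp_two_iff_integrable_sq Mz.1).1 Mz) η0
  choose rx rx0 hrx using fun i =>
    moll_tendsto volume (Mx i).1 ((memLp_two_iff_integrable_sq (Mx i).1).1 (Mx i)) η0
  haveI : Nonempty (Fin n) := ⟨⟨0, by omega⟩⟩
  obtain ⟨i0, hi0⟩ := Finite.exists_min rx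
  let r := min δ (min ru (min rz (rx i0)))
  have r0 : 0 < r := lt_min δ0 (lt_min ru0 (lt_min rz0 (rx0 i0)))
  have rδ : r ≤ δ := min_le_left _ _
  have rru : r ≤ ru := (min_le_right _ _).trans (min_le_left _ _)
  have rrz : r ≤ rz := (min_le_right _ _).trans ((min_le_right _ _).trans (min_le_left _ _))
  have rrx : ∀ i, r ≤ rx i := fun i =>
    ((min_le_right _ _).trans ((min_le_right _ _).trans (min_le_right _ _))).trans (hi0 i)
  let f : ContDiffBump (0 : VV n) := ⟨r / 2, r, by positivity, by linarith⟩
  have fr : f.rOut = r := rfl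
  obtain ⟨iu, hu⟩ := hru f rru
  obtain ⟨iz', hz'⟩ := hrz f rrz
  have hx' := fun i => hrx i f (rrx i)
  let mo : (VV n → ℝ) → VV n → ℝ := fun h =>
    (f.normed volume ⋆[ContinuousLinearMap.lsmul ℝ ℝ, volume] h)
  have m0 : ∀ h : VV n → ℝ, (∀ p, p ∉ tsupport χ → h p = 0) → ∀ p, p ∉ K → mo h p = 0 :=
    fun h hh p hp => moll_supp f (fr.le.trans rδ) hh hp
  have fd : ∀ v p, fderiv ℝ (mo u) p v = mo (H v) p := fun v p =>
    moll_fderiv volume f lu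
      (weak_cut volume hφ (hG v) (fun ψ a b c => hw ψ a b c v) cs cc cΩ) p
  have ts : tsupport (mo u) ⊆ K := by
    apply closure_minimal _ hK.isClosed
    intro p hp
    by_contra h
    exact hp (m0 u u0 p h)
  refine ⟨mo u, ?_, hK.of_isClosed_subset (isClosed_tsupport _) ts, ts.trans hδ, ?_⟩
  · exact f.hasCompactSupport_normed.contDiff_convolution_left _ f.contDiff_normed lu
  let Q : VV n → ℝ := fun p => (φ p - χ p * φ p) ^ 2 * p.2 +
        energyDensity n (fun p v => G p v - (χ p * G p v + fderiv ℝ χ p v * φ p)) p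
  let P : VV n → ℝ := fun p => (mo u p - u p) ^ 2 + (mo (H (0, 1)) p - H (0, 1) p) ^ 2 +
    ∑ i : Fin n, (mo (H (EuclideanSpace.single i 1, 0)) p - H (EuclideanSpace.single i 1, 0) p) ^ 2
  have is : Integrable (fun p => ∑ i : Fin n, (mo (H (EuclideanSpace.single i 1, 0)) p
      - H (EuclideanSpace.single i 1, 0) p) ^ 2) volume := integrable_finset_sum _ fun i _ => (hx' i).1
  have iuz : Integrable (fun p => (mo u p - u p) ^ 2 + (mo (H (0, 1)) p - H (0, 1) p) ^ 2) volume :=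
    iu.add iz'
  have iP : Integrable P volume := iuz.add is
  have hP : ∫ p, P p ≤ (n + 2) * η := by
    have e1 : ∫ p, P p = (∫ p, (mo u p - u p) ^ 2) + (∫ p, (mo (H (0, 1)) p - H (0, 1) p) ^ 2) +
      ∑ i : Fin n, ∫ p, (mo (H (EuclideanSpace.single i 1, 0)) p - H (EuclideanSpace.single i 1, 0) p) ^ 2 := by
      rw [← integral_finset_sum _ fun i _ => (hx' i).1, ← integral_add iu iz', ← integral_add iuz is]
    have e2 : ∑ i : Fin n, ∫ p, (mo (H (EuclideanSpace.single i 1, 0)) p - H (EuclideanSpace.single i 1, 0) p) ^ 2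
        ≤ ∑ i : Fin n, η := Finset.sum_le_sum fun i _ => (hx' i).2
    simp only [Finset.sum_const, Finset.card_univ, Fintype.card_fin, nsmul_eq_mul] at e2
    rw [e1]
    change _ ≤ _ at hu
    have h1 : ∫ p, (mo u p - u p) ^ 2 ≤ η := hu
    have h2 : ∫ p, (mo (H (0, 1)) p - H (0, 1) p) ^ 2 ≤ η := hz'
    linarith
  have P0 : ∀ p, 0 ≤ P p := fun p => by positivity
  have hPΩ : ∫ p in Om n, P p ≤ (n + 2) * η :=
    (setIntegral_le_integral iP (Filter.Eventually.of_forall P0)).trans hP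
  have iB : IntegrableOn (fun p => 2 * Q p + 2 * M * P p) (Om n) :=
    (iE.const_mul 2).add (iP.integrableOn.const_mul (2 * M))
  have hB : ∫ p in Om n, (2 * Q p + 2 * M * P p) < ε := by
    rw [integral_add (iE.const_mul 2) (iP.integrableOn.const_mul (2 * M)), integral_const_mul,
      integral_const_mul]
    have h1 : ∫ p in Om n, Q p < ε / 4 := hEε
    have h2 : 2 * M * ∫ p in Om n, P p ≤ 2 * M * ((n + 2) * η) :=
      mul_le_mul_of_nonneg_left hPΩ (by positivity)
    have h3 : 2 * M * ((n + 2) * η) = ε / 4 := by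
      simp only [η]
      field_simp
      ring
    linarith
  refine lt_of_le_of_lt (integral_mono_of_nonneg ?_ iB ?_) hB
  · filter_upwards [ae_restrict_mem mΩ] with p hp
    have hp' : 0 < p.2 := hp
    simp only [energyDensity, Pi.zero_apply]
    positivity
  · filter_upwards [ae_restrict_mem mΩ] with p hp
    have hp' : 0 < p.2 := hp
    have hwp : 0 ≤ p.2 ^ (-(1 : ℝ) / n) := rpow_nonneg hp'.le _
    have key : ∀ (h : VV n → ℝ), (∀ p, p ∉ tsupport χ → h p = 0) → ∀ a c : ℝ, 0 ≤ c →
        (p ∈ K → c ≤ M) →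
        c * (a - mo h p) ^ 2 ≤ 2 * (c * (a - h p) ^ 2) + 2 * M * (mo h p - h p) ^ 2 := by
      intro h hh a c c0 hc
      have h1 : c * (mo h p - h p) ^ 2 ≤ M * (mo h p - h p) ^ 2 := by
        by_cases hk : p ∈ K
        · exact mul_le_mul_of_nonneg_right (hc hk) (sq_nonneg _)
        · rw [m0 h hh p hk, hh p fun h => hk (hTK h)]
          simp
      have h2 : (a - mo h p) ^ 2 ≤ 2 * (a - h p) ^ 2 + 2 * (mo h p - h p) ^ 2 := by
        nlinarith [sq_nonneg ((a - h p) + (mo h p - h p))]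
      have h3 := mul_le_mul_of_nonneg_left h2 c0
      linarith
    have k1 := key u u0 (φ p) p.2 hp'.le (hMz p)
    have k2 := key (H (0, 1)) (H0 _) (G p (0, 1)) p.2 hp'.le (hMz p)
    have k3 : p.2 ^ (-(1 : ℝ) / n) * ∑ i : Fin n, (G p (EuclideanSpace.single i 1, 0) -
        mo (H (EuclideanSpace.single i 1, 0)) p) ^ 2 ≤
        2 * (p.2 ^ (-(1 : ℝ) / n) * ∑ i : Fin n, (G p (EuclideanSpace.single i 1, 0) -
          H (EuclideanSpace.single i 1, 0) p) ^ 2) +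
        2 * M * ∑ i : Fin n, (mo (H (EuclideanSpace.single i 1, 0)) p -
          H (EuclideanSpace.single i 1, 0) p) ^ 2 := by
      rw [Finset.mul_sum, Finset.mul_sum, Finset.mul_sum, Finset.mul_sum, ← Finset.sum_add_distrib]
      exact Finset.sum_le_sum fun i _ => key _ (H0 _) _ _ hwp (hMw p)
    simp only [energyDensity, fd, Q, P]
    simp only [H, u] at k1 k2 k3 ⊢
    linarith

/-- Density of `C₀^∞(Ω)` in the energy space `E` for Taub's spacetime (`n ≥ 2`):
every `φ ∈ E`, i.e. `φ ∈ L²(Ω, z dμ) ∩ H¹_loc(Ω)` with finite energy `b(φ,φ) < ∞`,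
can be approximated in the energy norm
`‖φ‖_E² = b(φ,φ) + ‖φ‖_H²` by smooth functions compactly supported in the open set `Ω`. -/
theorem stmt1 (n : ℕ) (hn : 2 ≤ n)
    (φ : EuclideanSpace ℝ (Fin n) × ℝ → ℝ)
    (G : EuclideanSpace ℝ (Fin n) × ℝ → EuclideanSpace ℝ (Fin n) × ℝ → ℝ)
    (hweak : IsWeakFDerivOn n φ G)
    (hH : IntegrableOn (fun p => φ p ^ 2 * p.2) {p | 0 < p.2})
    (hE : IntegrableOn (energyDensity n G) {p | 0 < p.2}) :
    ∀ ε > (0 : ℝ), ∃ ψ : EuclideanSpace ℝ (Fin n) × ℝ → ℝ,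
      ContDiff ℝ (⊤ : ℕ∞) ψ ∧ HasCompactSupport ψ ∧
      tsupport ψ ⊆ {p : EuclideanSpace ℝ (Fin n) × ℝ | 0 < p.2} ∧
      (∫ p in {p : EuclideanSpace ℝ (Fin n) × ℝ | 0 < p.2},
          ((φ p - ψ p) ^ 2 * p.2 +
            energyDensity n (fun p v => G p v - fderiv ℝ ψ p v) p)) < ε := by
  exact stmt1_aux n hn φ G hweak hH hE
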